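/- arXiv:0908.1976 — 5 statements merged into one kernel-verified Lean document; each statement's English description precedes it below -/
import Mathlib

section
/- Let θ₁ = (b, σ₁) and θ₂ = (b', σ₂) be involutions in the hyperoctahedral group W(Bₙ). Then θ₁ and θ₂ are conjugate in W(Bₙ) if and only if σ₁ and σ₂ are conjugate in Perm(Fin n) and n_s(θ₁) = n_s(θ₂) (equivalently, n_r(θ₁) = n_r(θ₂)). In particular, the conjugacy class of an involution θ is uniquely determined by the pair of numbers (n_c(θ), n_s(θ)). -/
open Multiplicative

/-- The permutation action of `Equiv.Perm (Fin n)` on `Multiplicative (Fin n → ZMod 2)`,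
permuting coordinates. -/
def permAction (n : ℕ) :
    Equiv.Perm (Fin n) →* MulAut (Multiplicative (Fin n → ZMod 2)) where
  toFun σ :=
    { toFun := fun b => Multiplicative.ofAdd (fun i => Multiplicative.toAdd b (σ⁻¹ i))
      invFun := fun b => Multiplicative.ofAdd (fun i => Multiplicative.toAdd b (σ i))
      left_inv := by
        intro b
        simp
      right_inv := by
        intro b
        simp
      map_mul' := by
        intro a b
        rfl }
  map_one' := by
    apply MulEquiv.ext
    intro b
    simp
  map_mul' := by
    intro σ τ
    apply MulEquiv.ext
    intro b
    simp [mul_inv_rev, Equiv.Perm.mul_apply]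

/-- The hyperoctahedral group `W(Bₙ)` as the semidirect product
`(Fin n → ZMod 2) ⋊ Perm (Fin n)`. -/
abbrev HO (n : ℕ) :=
  Multiplicative (Fin n → ZMod 2) ⋊[permAction n] Equiv.Perm (Fin n)

/-- `n_s θ`: the number of indices fixed by the permutation part whose bit is `0`. -/
noncomputable def nsHO {n : ℕ} (θ : HO n) : ℕ :=
  Nat.card {i : Fin n // θ.right i = i ∧ Multiplicative.toAdd θ.left i = 0}

/-- `n_r θ`: the number of indices fixed by the permutation part whose bit is `1`. -/
noncomputable def nrHO {n : ℕ} (θ : HO n) : ℕ :=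
  Nat.card {i : Fin n // θ.right i = i ∧ Multiplicative.toAdd θ.left i = 1}

/-- `n_c θ`: the number of indices moved by the permutation part. -/
noncomputable def ncHO {n : ℕ} (θ : HO n) : ℕ :=
  Nat.card {i : Fin n // θ.right i ≠ i}

theorem HO_sq {n : ℕ} {θ : HO n} (h : θ ^ 2 = 1) :
    (∀ i, θ.right (θ.right i) = i) ∧ ∀ i, toAdd θ.left (θ.right i) = toAdd θ.left i := by
  rw [sq] at h
  have hr : θ.right * θ.right = 1 := congrArg SemidirectProduct.right h
  have hl : θ.left * permAction n θ.right θ.left = 1 := congrArg SemidirectProduct.left h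
  have hinv : θ.right⁻¹ = θ.right := inv_eq_of_mul_eq_one_left hr
  refine ⟨fun i => by rw [← Equiv.Perm.mul_apply, hr]; rfl, fun i => ?_⟩
  have h2 : toAdd θ.left i + toAdd θ.left (θ.right⁻¹ i) = 0 :=
    congrFun (congrArg toAdd hl) i
  rw [hinv] at h2
  exact (CharTwo.add_eq_zero.mp h2).symm

theorem HO_isConj {n : ℕ} (θ₁ θ₂ : HO n) :
    IsConj θ₁ θ₂ ↔ ∃ (τ : Equiv.Perm (Fin n)) (c : Fin n → ZMod 2),
      (∀ i, τ (θ₁.right i) = θ₂.right (τ i)) ∧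
      ∀ i, c (τ i) + toAdd θ₁.left i = toAdd θ₂.left (τ i) + c (θ₂.right⁻¹ (τ i)) := by
  rw [isConj_iff]
  constructor
  · rintro ⟨g, hg⟩
    rw [mul_inv_eq_iff_eq_mul] at hg
    refine ⟨g.right, toAdd g.left, fun i => ?_, fun i => ?_⟩
    · exact DFunLike.congr_fun (congrArg SemidirectProduct.right hg) i
    · have h : toAdd g.left (g.right i) + toAdd θ₁.left (g.right⁻¹ (g.right i)) =
          toAdd θ₂.left (g.right i) + toAdd g.left (θ₂.right⁻¹ (g.right i)) :=
        congrFun (congrArg (fun x => toAdd (SemidirectProduct.left x)) hg) (g.right i)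
      simpa using h
  · rintro ⟨τ, c, h1, h2⟩
    refine ⟨⟨ofAdd c, τ⟩, ?_⟩
    rw [mul_inv_eq_iff_eq_mul]
    apply SemidirectProduct.ext
    · apply toAdd.injective
      funext j
      change c j + toAdd θ₁.left (τ⁻¹ j) = toAdd θ₂.left j + c (θ₂.right⁻¹ j)
      have := h2 (τ⁻¹ j)
      simpa using this
    · exact Equiv.ext h1

theorem HO_cycleType {n : ℕ} {σ : Equiv.Perm (Fin n)} (h : ∀ i, σ (σ i) = i) :
    2 * Multiset.card σ.cycleType = Nat.card {i : Fin n // σ i ≠ i} ∧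
    σ.cycleType = Multiset.replicate (Multiset.card σ.cycleType) 2 := by
  have hs : σ ^ 2 = 1 := by
    ext i; simp [sq, h]
  have hr : σ.cycleType = Multiset.replicate (Multiset.card σ.cycleType) 2 := by
    rw [Multiset.eq_replicate_card]
    intro b hb
    have h1 := Equiv.Perm.two_le_of_mem_cycleType hb
    have h2 := (Equiv.Perm.dvd_of_mem_cycleType hb).trans (orderOf_dvd_of_pow_eq_one hs)
    exact le_antisymm (Nat.le_of_dvd (by norm_num) h2) h1
  refine ⟨?_, hr⟩
  have h3 := Equiv.Perm.sum_cycleType σ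
  rw [hr, Multiset.sum_replicate] at h3
  rw [Nat.card_eq_fintype_card, Fintype.card_subtype]
  change _ = σ.support.card
  rw [← h3, smul_eq_mul, mul_comm]

theorem HO_card {n : ℕ} (θ : HO n) : ncHO θ + nsHO θ + nrHO θ = n := by
  classical
  unfold ncHO nsHO nrHO
  simp only [Nat.card_eq_fintype_card, Fintype.card_subtype, Finset.card_filter]
  rw [← Finset.sum_add_distrib, ← Finset.sum_add_distrib]
  conv_rhs => rw [← Fintype.card_fin n, ← Finset.card_univ, Finset.card_eq_sum_ones]
  refine Finset.sum_congr rfl fun i _ => ?_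
  have : ∀ x : ZMod 2, x = 0 ∨ x = 1 := by decide
  by_cases hi : θ.right i = i
  · rcases this (toAdd θ.left i) with h | h <;> simp [hi, h]
  · simp [hi]

theorem HO_forward {n : ℕ} {θ₁ θ₂ : HO n} (h : IsConj θ₁ θ₂) :
    IsConj θ₁.right θ₂.right ∧ ncHO θ₁ = ncHO θ₂ ∧ nsHO θ₁ = nsHO θ₂ := by
  obtain ⟨τ, c, h1, h2⟩ := (HO_isConj _ _).1 h
  have hf : ∀ i, θ₁.right i = i ↔ θ₂.right (τ i) = τ i := fun i => by
    rw [← h1, τ.injective.eq_iff]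
  refine ⟨?_, ?_, ?_⟩
  · rw [isConj_iff]
    refine ⟨τ, ?_⟩
    rw [mul_inv_eq_iff_eq_mul]
    exact Equiv.ext h1
  · exact Nat.card_congr (τ.subtypeEquiv fun i => not_congr (hf i))
  · refine Nat.card_congr (τ.subtypeEquiv fun i => ?_)
    rw [hf]
    refine and_congr_right fun hi => ?_
    have h3 := h2 i
    rw [Equiv.Perm.inv_eq_iff_eq.2 hi.symm, add_comm] at h3
    rw [add_right_cancel h3]

theorem HO_backward {n : ℕ} {θ₁ θ₂ : HO n} (hθ₁ : θ₁ ^ 2 = 1) (hθ₂ : θ₂ ^ 2 = 1)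
    (hc : ncHO θ₁ = ncHO θ₂) (hs : nsHO θ₁ = nsHO θ₂) : IsConj θ₁ θ₂ := by
  classical
  obtain ⟨hs1, hb1⟩ := HO_sq hθ₁
  obtain ⟨hs2, hb2⟩ := HO_sq hθ₂
  have hr : nrHO θ₁ = nrHO θ₂ := by
    have := HO_card θ₁
    have := HO_card θ₂
    omega
  have hconj : IsConj θ₁.right θ₂.right := by
    rw [Equiv.Perm.isConj_iff_cycleType_eq]
    obtain ⟨a1, a2⟩ := HO_cycleType hs1
    obtain ⟨b1, b2⟩ := HO_cycleType hs2
    unfold ncHO at hc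
    rw [a2, b2]
    congr 1
    omega
  obtain ⟨τ₀, h0⟩ := isConj_iff.1 hconj
  rw [mul_inv_eq_iff_eq_mul] at h0
  have h0' : ∀ i, τ₀ (θ₁.right i) = θ₂.right (τ₀ i) := fun i => DFunLike.congr_fun h0 i
  unfold nsHO at hs
  unfold nrHO at hr
  let eS := Classical.choice (Finite.card_eq.1 hs)
  let eR := Classical.choice (Finite.card_eq.1 hr)
  have z2 : ∀ x : ZMod 2, x ≠ 0 → x = 1 := by decide
  have hf0 : ∀ i, θ₁.right i = i ↔ θ₂.right (τ₀ i) = τ₀ i := fun i => by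
    rw [← h0', τ₀.injective.eq_iff]
  let f : Fin n → Fin n := fun i =>
    if hi : θ₁.right i = i then
      if hb : toAdd θ₁.left i = 0 then (eS ⟨i, hi, hb⟩).1 else (eR ⟨i, hi, z2 _ hb⟩).1
    else τ₀ i
  have fM : ∀ i, θ₁.right i ≠ i → f i = τ₀ i := fun i hi => by simp [f, hi]
  have fS : ∀ i (h : θ₁.right i = i ∧ toAdd θ₁.left i = 0), f i = (eS ⟨i, h⟩).1 :=
    fun i h => by simp [f, h.1, h.2]
  have fR : ∀ i (h : θ₁.right i = i ∧ toAdd θ₁.left i = 1), f i = (eR ⟨i, h⟩).1 :=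
    fun i h => by simp [f, h.1, h.2]
  have ffix : ∀ i, θ₁.right i = i →
      θ₂.right (f i) = f i ∧ toAdd θ₂.left (f i) = toAdd θ₁.left i := by
    intro i hi
    by_cases hb : toAdd θ₁.left i = 0
    · rw [hb, fS i ⟨hi, hb⟩]; exact (eS ⟨i, hi, hb⟩).2
    · have hb := z2 _ hb
      rw [hb, fR i ⟨hi, hb⟩]; exact (eR ⟨i, hi, hb⟩).2
  have fmov : ∀ i, θ₁.right i ≠ i → θ₂.right (f i) ≠ f i := by
    intro i hi
    rw [fM i hi]; exact fun h => hi ((hf0 i).2 h)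
  have finj : Function.Injective f := by
    intro i j hij
    by_cases hi : θ₁.right i = i
    · have hj : θ₁.right j = j := by
        by_contra hj
        exact fmov j hj (hij ▸ (ffix i hi).1)
      have hbb : toAdd θ₁.left i = toAdd θ₁.left j := by
        rw [← (ffix i hi).2, ← (ffix j hj).2, hij]
      by_cases hb : toAdd θ₁.left i = 0
      · rw [fS i ⟨hi, hb⟩, fS j ⟨hj, hbb ▸ hb⟩] at hij
        exact congrArg Subtype.val (eS.injective (Subtype.ext hij))
      · have hb := z2 _ hb
        rw [fR i ⟨hi, hb⟩, fR j ⟨hj, hbb ▸ hb⟩] at hij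
        exact congrArg Subtype.val (eR.injective (Subtype.ext hij))
    · have hj : θ₁.right j ≠ j := by
        intro hj
        exact fmov i hi (hij ▸ (ffix j hj).1)
      rw [fM i hi, fM j hj] at hij
      exact τ₀.injective hij
  have feq : ∀ i, f (θ₁.right i) = θ₂.right (f i) := by
    intro i
    by_cases hi : θ₁.right i = i
    · rw [hi, (ffix i hi).1]
    · rw [fM i hi, fM, h0']
      intro h
      exact hi (θ₁.right.injective h)
  let τ : Equiv.Perm (Fin n) := Equiv.ofBijective f (Finite.injective_iff_bijective.1 finj)
  have hτ : ∀ i, τ i = f i := fun i => rfl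
  have hinv : ∀ j, θ₂.right⁻¹ j = θ₂.right j := fun j =>
    Equiv.Perm.inv_eq_iff_eq.2 (hs2 j).symm
  let d : Fin n → ZMod 2 := fun j => toAdd θ₁.left (τ.symm j) + toAdd θ₂.left j
  have dτ : ∀ i, d (τ i) = toAdd θ₁.left i + toAdd θ₂.left (τ i) := fun i => by simp [d]
  rw [HO_isConj]
  refine ⟨τ, fun j => if j < θ₂.right j then d j else 0, feq, fun i => ?_⟩
  have hd : d (θ₂.right (τ i)) = d (τ i) := by
    have : θ₂.right (τ i) = τ (θ₁.right i) := (feq i).symm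
    rw [this, dτ, dτ, hb1, ← this, hb2]
  simp only [hinv, hs2, hd, dτ]
  have c2 : ∀ x y : ZMod 2, x + y + x = y ∧ y = x + (y + x) ∧ x + y + y = x := by decide
  have c3 : ∀ x y : ZMod 2, x + y + x = y + 0 ∧ 0 + x = y + (x + y) := by decide
  rcases lt_trichotomy (τ i) (θ₂.right (τ i)) with h | h | h
  · rw [if_pos h, if_neg h.le.not_gt]
    exact (c3 _ _).1
  · have hi : θ₁.right i = i := by
      by_contra hi
      exact fmov i hi h.symm
    rw [← h]
    simp only [lt_irrefl, if_false, zero_add, add_zero]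
    exact (ffix i hi).2.symm
  · rw [if_neg h.le.not_gt, if_pos h]
    exact (c3 _ _).2

/-- Two involutions `θ₁ = (b, σ₁)` and `θ₂ = (b', σ₂)` of the hyperoctahedral group
`W(Bₙ)` are conjugate if and only if `σ₁` and `σ₂` are conjugate in `Perm (Fin n)`
and `n_s θ₁ = n_s θ₂`.  In particular, the conjugacy class of an involution `θ` is
uniquely determined by the pair `(n_c θ, n_s θ)`. -/
theorem involution_isConj_iff (n : ℕ) (hn : 0 < n) (θ₁ θ₂ : HO n)
    (hθ₁ : θ₁ ^ 2 = 1) (hθ₂ : θ₂ ^ 2 = 1) :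
    (IsConj θ₁ θ₂ ↔ IsConj θ₁.right θ₂.right ∧ nsHO θ₁ = nsHO θ₂) ∧
    (IsConj θ₁ θ₂ ↔ ncHO θ₁ = ncHO θ₂ ∧ nsHO θ₁ = nsHO θ₂) := by
  have hcc : IsConj θ₁.right θ₂.right → ncHO θ₁ = ncHO θ₂ := by
    intro h
    have h' := Equiv.Perm.isConj_iff_cycleType_eq.1 h
    have a := (HO_cycleType (HO_sq hθ₁).1).1
    have b := (HO_cycleType (HO_sq hθ₂).1).1
    unfold ncHO
    rw [← a, ← b, h']
  refine ⟨⟨fun h => ⟨(HO_forward h).1, (HO_forward h).2.2⟩, fun h => ?_⟩,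
    ⟨fun h => (HO_forward h).2, fun h => HO_backward hθ₁ hθ₂ h.1 h.2⟩⟩
  exact HO_backward hθ₁ hθ₂ (hcc h.1) h.2
end

section
/- Let θ be an involution in the hyperoctahedral group W(Bₙ), and set n_c = n_c(θ) (an even number, n_c = 2k) and n_s = n_s(θ). Then the number of involutions in W(Bₙ) conjugate to θ equals (n! / ((n − n_c)! · k!)) · C(n − n_c, n_s), where C denotes the binomial coefficient. -/
open Multiplicative

theorem ho_inv_apply {n : ℕ} (σ : Equiv.Perm (Fin n)) (i : Fin n) : σ⁻¹ (σ i) = i :=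
  σ.symm_apply_apply i

theorem ho_apply_inv {n : ℕ} (σ : Equiv.Perm (Fin n)) (i : Fin n) : σ (σ⁻¹ i) = i :=
  σ.apply_symm_apply i

theorem ho_sq_iff {n : ℕ} (θ : HO n) : θ ^ 2 = 1 ↔
    (∀ i, θ.right (θ.right i) = i) ∧ ∀ i, toAdd θ.left (θ.right i) = toAdd θ.left i := by
  rw [pow_two, SemidirectProduct.ext_iff]
  have h1 : (θ * θ).right = (1 : HO n).right ↔ ∀ i, θ.right (θ.right i) = i := by
    rw [Equiv.ext_iff]; rfl
  have h2 : (θ * θ).left = (1 : HO n).left ↔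
      ∀ i, toAdd θ.left i + toAdd θ.left (θ.right⁻¹ i) = 0 := by
    constructor
    · intro h i
      exact congrFun (congrArg toAdd h) i
    · intro h
      exact congrArg ofAdd (funext h)
  rw [h1, h2]
  have h3 : ∀ x y : ZMod 2, x + y = 0 ↔ x = y := by decide
  simp only [h3]
  constructor
  · rintro ⟨a, b⟩
    refine ⟨b, fun i => ?_⟩
    simpa using a (θ.right i)
  · rintro ⟨a, b⟩
    refine ⟨fun i => ?_, a⟩
    simpa using b (θ.right⁻¹ i)

theorem ho_conj_iff {n : ℕ} (θ τ : HO n) : IsConj θ τ ↔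
    ∃ (c : Fin n → ZMod 2) (π : Equiv.Perm (Fin n)),
      (∀ i, π (θ.right i) = τ.right (π i)) ∧
      ∀ i, c (π (θ.right i)) + toAdd θ.left (θ.right i) =
        toAdd τ.left (π (θ.right i)) + c (π i) := by
  rw [isConj_iff]
  have key : ∀ g : HO n, g * θ * g⁻¹ = τ ↔ (∀ i, g.right (θ.right i) = τ.right (g.right i)) ∧
      ∀ i, toAdd g.left (g.right (θ.right i)) + toAdd θ.left (θ.right i) =
        toAdd τ.left (g.right (θ.right i)) + toAdd g.left (g.right i) := by
    intro g
    rw [mul_inv_eq_iff_eq_mul, SemidirectProduct.ext_iff]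
    have h1 : (g * θ).right = (τ * g).right ↔
      ∀ i, g.right (θ.right i) = τ.right (g.right i) := by
      rw [Equiv.ext_iff]; rfl
    have h2 : (g * θ).left = (τ * g).left ↔
        ∀ i, toAdd g.left i + toAdd θ.left (g.right⁻¹ i) =
          toAdd τ.left i + toAdd g.left (τ.right⁻¹ i) := by
      constructor
      · intro h i
        exact congrFun (congrArg toAdd h) i
      · intro h
        exact congrArg ofAdd (funext h)
    rw [h1, h2, and_comm]
    refine and_congr_right fun h => ?_
    constructor
    · intro a i
      have := a (g.right (θ.right i))
      rw [h i] at this ⊢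
      rw [← h i] at this
      simp only [ho_inv_apply] at this
      rw [h i] at this
      simpa using this
    · intro a j
      have := a (θ.right⁻¹ (g.right⁻¹ j))
      have h' := h (θ.right⁻¹ (g.right⁻¹ j))
      simp only [ho_apply_inv] at this h'
      have h'' : τ.right⁻¹ j = g.right (θ.right⁻¹ (g.right⁻¹ j)) := by
        rw [Equiv.Perm.inv_eq_iff_eq]; exact h'
      rw [h'']; exact this
  constructor
  · rintro ⟨g, hg⟩
    exact ⟨toAdd g.left, g.right, (key g).1 hg⟩
  · rintro ⟨c, π, h⟩
    exact ⟨⟨ofAdd c, π⟩, (key _).2 h⟩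

theorem ho_exists_perm {n : ℕ} (σ σ' : Equiv.Perm (Fin n)) (b b' : Fin n → ZMod 2)
    (hσ : ∀ i, σ (σ i) = i) (hσ' : ∀ i, σ' (σ' i) = i)
    (e0 : {i // σ i = i ∧ b i = 0} ≃ {i // σ' i = i ∧ b' i = 0})
    (e1 : {i // σ i = i ∧ b i = 1} ≃ {i // σ' i = i ∧ b' i = 1})
    (e2 : {i // i < σ i} ≃ {i // i < σ' i}) :
    ∃ π : Equiv.Perm (Fin n), (∀ i, π (σ i) = σ' (π i)) ∧
      ∀ i, σ i = i → b i = b' (π i) := by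
  classical
  have h01 : ∀ x : ZMod 2, x ≠ 0 → x = 1 := by decide
  have hlt : ∀ i, ¬ (i < σ i) → σ i ≠ i → σ i < σ (σ i) := by
    intro i h1 h2
    rw [hσ]; exact lt_of_le_of_ne (not_lt.1 h1) h2
  let f : Fin n → Fin n := fun i =>
    if h : σ i = i then
      if h0 : b i = 0 then e0 ⟨i, h, h0⟩ else e1 ⟨i, h, h01 _ h0⟩
    else if h2 : i < σ i then e2 ⟨i, h2⟩ else σ' (e2 ⟨σ i, hlt i h2 h⟩)
  have f0 : ∀ i (h : σ i = i) (h0 : b i = 0), f i = e0 ⟨i, h, h0⟩ := by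
    intro i h h0; simp [f, h, h0]
  have f1 : ∀ i (h : σ i = i) (h0 : b i = 1), f i = e1 ⟨i, h, h0⟩ := by
    intro i h h0; simp [f, h, h0]
  have f2 : ∀ i (h : i < σ i), f i = e2 ⟨i, h⟩ := by
    intro i h; simp [f, h, h.ne']
  have f3 : ∀ i (h : σ i < σ (σ i)), f i = σ' (e2 ⟨σ i, h⟩) := by
    intro i h
    have h' := h
    rw [hσ] at h'
    simp [f, h'.ne, h'.not_gt]
  have cases4 : ∀ i, (σ i = i ∧ b i = 0) ∨ (σ i = i ∧ b i = 1) ∨ (i < σ i) ∨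
      (σ i < σ (σ i)) := by
    intro i
    by_cases h : σ i = i
    · by_cases h0 : b i = 0
      · exact Or.inl ⟨h, h0⟩
      · exact Or.inr (Or.inl ⟨h, h01 _ h0⟩)
    · by_cases h2 : i < σ i
      · exact Or.inr (Or.inr (Or.inl h2))
      · exact Or.inr (Or.inr (Or.inr (hlt i h2 h)))
  have p0 := fun x => (e0 x).2
  have p1 := fun x => (e1 x).2
  have p2 := fun x => (e2 x).2
  have hcomm : ∀ i, f (σ i) = σ' (f i) := by
    intro i
    rcases cases4 i with ⟨h, h0⟩ | ⟨h, h0⟩ | h | h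
    · rw [h, f0 i h h0, (p0 _).1]
    · rw [h, f1 i h h0, (p1 _).1]
    · rw [f2 i h, f3 (σ i) (by rw [hσ]; exact h)]
      simp only [hσ]
    · rw [f3 i h, f2 (σ i) h, hσ']
  have hsurj : Function.Surjective f := by
    have hA : ∀ j, j < σ' j → ∃ i, f i = j := by
      intro j h
      refine ⟨e2.symm ⟨j, h⟩, ?_⟩
      rw [f2 _ (e2.symm ⟨j, h⟩).2]; simp
    intro j
    by_cases h : σ' j = j
    · by_cases h0 : b' j = 0
      · refine ⟨e0.symm ⟨j, h, h0⟩, ?_⟩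
        rw [f0 _ (e0.symm ⟨j, h, h0⟩).2.1 (e0.symm ⟨j, h, h0⟩).2.2]; simp
      · have h0 := h01 _ h0
        refine ⟨e1.symm ⟨j, h, h0⟩, ?_⟩
        rw [f1 _ (e1.symm ⟨j, h, h0⟩).2.1 (e1.symm ⟨j, h, h0⟩).2.2]; simp
    · by_cases h2 : j < σ' j
      · exact hA j h2
      · obtain ⟨i, hi⟩ := hA (σ' j) (by rw [hσ']; exact lt_of_le_of_ne (not_lt.1 h2) h)
        exact ⟨σ i, by rw [hcomm, hi, hσ']⟩
  refine ⟨Equiv.ofBijective f (Finite.surjective_iff_bijective.1 hsurj), hcomm, ?_⟩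
  intro i h
  change b i = b' (f i)
  by_cases h0 : b i = 0
  · rw [f0 i h h0, (p0 _).2, h0]
  · rw [f1 i h (h01 _ h0), (p1 _).2, h01 _ h0]

theorem ho_half {n : ℕ} (σ : Equiv.Perm (Fin n)) (hσ : ∀ i, σ (σ i) = i) :
    (Finset.univ.filter fun i => σ i ≠ i).card =
      2 * (Finset.univ.filter fun i => i < σ i).card := by
  have h1 : (Finset.univ.filter fun i => σ i ≠ i) =
      (Finset.univ.filter fun i => i < σ i) ∪ (Finset.univ.filter fun i => σ i < i) := by
    ext i
    simp only [Finset.mem_filter, Finset.mem_univ, true_and, Finset.mem_union]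
    rw [ne_iff_lt_or_gt, or_comm]
  have h2 : (Finset.univ.filter fun i => σ i < i) =
      (Finset.univ.filter fun i => i < σ i).map σ.toEmbedding := by
    ext i
    simp only [Finset.mem_filter, Finset.mem_univ, true_and, Finset.mem_map,
      Equiv.coe_toEmbedding]
    constructor
    · intro h
      exact ⟨σ i, by rwa [hσ], hσ i⟩
    · rintro ⟨j, h, rfl⟩
      rwa [hσ]
  rw [h1, Finset.card_union_of_disjoint, h2, Finset.card_map, two_mul]
  rw [Finset.disjoint_left]
  intro i
  simp only [Finset.mem_filter, Finset.mem_univ, true_and]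
  exact fun h => h.not_gt

theorem ho_split {n : ℕ} (θ : HO n) : nsHO θ + nrHO θ + ncHO θ = n := by
  classical
  unfold nsHO nrHO ncHO
  simp only [Nat.card_eq_fintype_card, Fintype.card_subtype]
  have h01 : ∀ x : ZMod 2, x = 1 ↔ x ≠ 0 := by decide
  have e : ∀ i, (θ.right i = i ∧ toAdd θ.left i = 1) ↔ (θ.right i = i ∧ ¬ toAdd θ.left i = 0) :=
    fun i => and_congr_right fun _ => h01 _
  simp only [e, ← Finset.filter_filter]
  rw [Finset.card_filter_add_card_filter_not, Finset.card_filter_add_card_filter_not]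
  simp

theorem ho_conj_char {n : ℕ} (θ : HO n) (hθ : θ ^ 2 = 1) (τ : HO n) : IsConj θ τ ↔
    τ ^ 2 = 1 ∧ ncHO τ = ncHO θ ∧ nsHO τ = nsHO θ := by
  constructor
  · intro h
    refine ⟨?_, ?_⟩
    · obtain ⟨g, rfl⟩ := isConj_iff.1 h
      rw [conj_pow, hθ]; simp
    · obtain ⟨c, π, h1, h2⟩ := (ho_conj_iff _ _).1 h
      have hr : ∀ i, θ.right i = i ↔ τ.right (π i) = π i := by
        intro i
        rw [← h1, π.injective.eq_iff]
      have hl : ∀ i, θ.right i = i → toAdd θ.left i = toAdd τ.left (π i) := by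
        intro i hi
        have := h2 i
        rw [hi, add_comm] at this
        exact add_right_cancel this
      refine ⟨(Nat.card_congr (π.subtypeEquiv fun i => not_congr (hr i))).symm,
        (Nat.card_congr (π.subtypeEquiv fun i => ?_)).symm⟩
      rw [← hr]
      refine and_congr_right fun hi => ?_
      rw [hl i hi]
  · rintro ⟨hτ, hc, hs⟩
    rw [ho_sq_iff] at hθ hτ
    have hr : nrHO τ = nrHO θ := by
      have := ho_split θ
      have := ho_split τ
      omega
    have ht : Nat.card {i // i < θ.right i} = Nat.card {i // i < τ.right i} := by
      have a := ho_half θ.right hθ.1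
      have b := ho_half τ.right hτ.1
      unfold ncHO at hc
      simp only [Nat.card_eq_fintype_card, Fintype.card_subtype] at hc ⊢
      omega
    obtain ⟨π, h1, h2⟩ := ho_exists_perm θ.right τ.right (toAdd θ.left) (toAdd τ.left) hθ.1 hτ.1
      ((Finite.card_eq.1 hs.symm).some) ((Finite.card_eq.1 hr.symm).some) ((Finite.card_eq.1 ht).some)
    rw [ho_conj_iff]
    let c : Fin n → ZMod 2 := fun j =>
      if j < τ.right j then toAdd τ.left j + toAdd θ.left (π⁻¹ j) else 0
    refine ⟨c, π, h1, fun i => ?_⟩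
    have z2 : ∀ x y : ZMod 2, 0 + x = y + (y + x) := by decide
    have e1 : c (π i) = if π i < τ.right (π i) then toAdd τ.left (π i) + toAdd θ.left i else 0 := by
      simp [c]
    have e2 : c (π (θ.right i)) = if τ.right (π i) < π i then
        toAdd τ.left (π i) + toAdd θ.left i else 0 := by
      simp only [c, ho_inv_apply, hθ.2]
      rw [h1, hτ.1, hτ.2]
    rw [e1, e2, hθ.2, h1, hτ.2]
    rcases lt_trichotomy (π i) (τ.right (π i)) with h | h | h
    · rw [if_pos h, if_neg h.not_gt]; exact z2 _ _
    · have : θ.right i = i := by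
        apply π.injective; rw [h1, ← h]
      rw [← h, h2 i this]; simp
    · rw [if_pos h, if_neg h.not_gt]
      generalize toAdd τ.left (π i) = x
      generalize toAdd θ.left i = y
      revert x y; decide

theorem ho_count_bits {n : ℕ} (σ : Equiv.Perm (Fin n)) (hσ : ∀ i, σ (σ i) = i) (k s : ℕ)
    (hk : (Finset.univ.filter fun i => σ i ≠ i).card = 2 * k) :
    Nat.card {b : Fin n → ZMod 2 // (∀ i, b (σ i) = b i) ∧
      Nat.card {i // σ i = i ∧ b i = 0} = s} = 2 ^ k * Nat.choose (n - 2 * k) s := by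
  classical
  have hT : (Finset.univ.filter fun i => i < σ i).card = k := by
    have := ho_half σ hσ
    omega
  have hF : (Finset.univ.filter fun i => σ i = i).card = n - 2 * k := by
    have := Finset.card_filter_add_card_filter_not (s := (Finset.univ : Finset (Fin n)))
      (fun i => σ i = i)
    simp only [Finset.card_univ, Fintype.card_fin] at this
    simp only [ne_eq] at hk
    omega
  rw [← hT, ← Finset.card_powerset, hT, ← hF, ← Finset.card_powersetCard, ← Finset.card_product]
  simp only [Nat.card_eq_fintype_card, Fintype.card_subtype]
  have h01 : ∀ x : ZMod 2, x ≠ 0 → 1 = x := by decide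
  refine Finset.card_bij'
    (fun b _ => (Finset.univ.filter fun i => i < σ i ∧ b i = 0,
      Finset.univ.filter fun i => σ i = i ∧ b i = 0))
    (fun S _ i => if min i (σ i) ∈ S.1 ∪ S.2 then 0 else 1) ?_ ?_ ?_ ?_
  · intro b hb
    simp only [Finset.mem_filter, Finset.mem_univ, true_and] at hb
    simp only [Finset.mem_product, Finset.mem_powerset, Finset.mem_powersetCard]
    refine ⟨?_, ?_, hb.2⟩
    · intro i; simp +contextual
    · intro i; simp +contextual
  · rintro ⟨S1, S2⟩ hS
    simp only [Finset.mem_product, Finset.mem_powerset, Finset.mem_powersetCard] at hS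
    obtain ⟨hS1, hS2, hS3⟩ := hS
    simp only [Finset.mem_filter, Finset.mem_univ, true_and]
    constructor
    · intro i; rw [hσ, min_comm]
    · rw [← hS3]
      congr 1
      ext i
      simp only [Finset.mem_filter, Finset.mem_univ, true_and, Finset.mem_union]
      constructor
      · rintro ⟨h, h'⟩
        rw [h, min_self] at h'
        by_contra hn
        have : i ∉ S1 := fun hh => by
          have := hS1 hh
          simp [h] at this
        simp [hn, this] at h'
      · intro h
        have := hS2 h
        simp only [Finset.mem_filter, Finset.mem_univ, true_and] at this
        simp [this, h]
  · intro b hb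
    simp only [Finset.mem_filter, Finset.mem_univ, true_and] at hb
    funext i
    simp only [Finset.mem_filter, Finset.mem_univ, true_and, Finset.mem_union]
    rcases lt_trichotomy i (σ i) with h | h | h
    · rw [min_eq_left h.le]
      by_cases h0 : b i = 0
      · simp [h, h0]
      · simp [h0, h01 _ h0]
    · rw [← h, min_self, ← h]
      by_cases h0 : b i = 0
      · simp [h0]
      · simp [h0, h01 _ h0]
    · rw [min_eq_right h.le, hσ, hb.1]
      by_cases h0 : b i = 0
      · simp [h, h0]
      · simp [h0, h01 _ h0]
  · rintro ⟨S1, S2⟩ hS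
    simp only [Finset.mem_product, Finset.mem_powerset, Finset.mem_powersetCard] at hS
    obtain ⟨hS1, hS2, hS3⟩ := hS
    have q1 : ∀ i, i ∈ S1 → i < σ i := fun i hi => by simpa using hS1 hi
    have q2 : ∀ i, i ∈ S2 → σ i = i := fun i hi => by simpa using hS2 hi
    have q3 : ∀ P : Prop, ∀ [Decidable P], ((if P then (0 : ZMod 2) else 1) = 0) ↔ P := by
      intro P _; split_ifs <;> simp [*]
    simp only [q3, Prod.mk.injEq]
    constructor
    · ext i
      simp only [Finset.mem_filter, Finset.mem_univ, true_and, Finset.mem_union]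
      constructor
      · rintro ⟨h, h'⟩
        rw [min_eq_left h.le] at h'
        exact h'.resolve_right fun h' => h.ne' (q2 i h')
      · intro h
        refine ⟨q1 i h, ?_⟩
        rw [min_eq_left (q1 i h).le]; exact Or.inl h
    · ext i
      simp only [Finset.mem_filter, Finset.mem_univ, true_and, Finset.mem_union]
      constructor
      · rintro ⟨h, h'⟩
        rw [h, min_self] at h'
        exact h'.resolve_left fun h' => (q1 i h').ne' h
      · intro h
        refine ⟨q2 i h, ?_⟩
        rw [q2 i h, min_self]; exact Or.inr h

theorem ho_cycleType {n : ℕ} (σ : Equiv.Perm (Fin n)) (k : ℕ) :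
    ((∀ i, σ (σ i) = i) ∧ (Finset.univ.filter fun i => σ i ≠ i).card = 2 * k) ↔
      σ.cycleType = Multiset.replicate k 2 := by
  have hs : (Finset.univ.filter fun i => σ i ≠ i) = σ.support := by
    ext i; simp
  rw [hs, ← Equiv.Perm.sum_cycleType]
  constructor
  · rintro ⟨h, h'⟩
    have : ∀ m ∈ σ.cycleType, m = 2 := by
      intro m hm
      have h1 := Equiv.Perm.two_le_of_mem_cycleType hm
      have h2 : m ∣ 2 := (Equiv.Perm.dvd_of_mem_cycleType hm).trans
        (orderOf_dvd_of_pow_eq_one (by ext i; simp [pow_two, h]))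
      exact le_antisymm (Nat.le_of_dvd two_pos h2) h1
    have e := Multiset.eq_replicate_card.2 this
    rw [e, Multiset.sum_replicate, smul_eq_mul] at h'
    rw [e]; congr 1; omega
  · intro h
    refine ⟨fun i => ?_, by rw [h, Multiset.sum_replicate, smul_eq_mul, mul_comm]⟩
    have : orderOf σ ∣ 2 := by
      rw [← Equiv.Perm.lcm_cycleType, h, Multiset.lcm_dvd]
      intro m hm
      rw [Multiset.eq_of_mem_replicate hm]
    have := orderOf_dvd_iff_pow_eq_one.1 this
    rw [pow_two] at this
    exact Equiv.ext_iff.1 this i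

theorem ho_count_perm (n k : ℕ) (hk : 2 * k ≤ n) :
    Nat.card {σ : Equiv.Perm (Fin n) // (∀ i, σ (σ i) = i) ∧
      (Finset.univ.filter fun i => σ i ≠ i).card = 2 * k} *
      ((n - 2 * k).factorial * 2 ^ k * k.factorial) = n.factorial := by
  classical
  simp only [ho_cycleType]
  rw [Nat.card_eq_fintype_card, Fintype.card_subtype]
  have := Equiv.Perm.card_of_cycleType_mul_eq (Fin n) (Multiset.replicate k 2)
  have hp : ∏ m ∈ (Multiset.replicate k 2).toFinset,
      (Multiset.count m (Multiset.replicate k 2)).factorial = k.factorial := by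
    rcases Nat.eq_zero_or_pos k with rfl | h
    · simp
    · rw [Multiset.toFinset_replicate, if_neg h.ne']
      simp
  rw [hp, Multiset.sum_replicate, Multiset.prod_replicate, smul_eq_mul, mul_comm k 2,
    Fintype.card_fin, if_pos ⟨hk, fun a ha => (Multiset.eq_of_mem_replicate ha).ge⟩] at this
  exact this

/-- If `θ` is an involution in the hyperoctahedral group `W(Bₙ)` with `n_c θ = 2k`,
then the number of involutions conjugate to `θ` equals
`(n! / ((n − n_c θ)! · k!)) · C(n − n_c θ, n_s θ)`. -/
theorem card_conjugates_of_involution (n : ℕ) (hn : 0 < n) (θ : HO n)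
    (hθ : θ ^ 2 = 1) (k : ℕ) (hk : ncHO θ = 2 * k) :
    Nat.card {τ : HO n // IsConj θ τ} =
      Nat.factorial n / (Nat.factorial (n - ncHO θ) * Nat.factorial k) *
        Nat.choose (n - ncHO θ) (nsHO θ) := by
  classical
  have hle : 2 * k ≤ n := by
    have := ho_split θ
    omega
  have hcount := ho_count_perm n k hle
  rw [hk]
  generalize hs : nsHO θ = s
  let P := {σ : Equiv.Perm (Fin n) // (∀ i, σ (σ i) = i) ∧
      (Finset.univ.filter fun i => σ i ≠ i).card = 2 * k}
  let Q := fun σ : P => {b : Fin n → ZMod 2 // (∀ i, b (σ.1 i) = b i) ∧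
      Nat.card {i // σ.1 i = i ∧ b i = 0} = s}
  have hnc : ∀ τ : HO n, ncHO τ = (Finset.univ.filter fun i => τ.right i ≠ i).card := by
    intro τ
    unfold ncHO
    rw [Nat.card_eq_fintype_card, Fintype.card_subtype]
  have hchar : ∀ τ : HO n, IsConj θ τ ↔
      ((∀ i, τ.right (τ.right i) = i) ∧
        (Finset.univ.filter fun i => τ.right i ≠ i).card = 2 * k) ∧
      (∀ i, toAdd τ.left (τ.right i) = toAdd τ.left i) ∧
      Nat.card {i // τ.right i = i ∧ toAdd τ.left i = 0} = s := by
    intro τ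
    rw [ho_conj_char θ hθ τ, ho_sq_iff, hk, hs, hnc]
    unfold nsHO
    tauto
  let E : {τ : HO n // IsConj θ τ} ≃ Σ σ : P, Q σ :=
    { toFun := fun τ => ⟨⟨τ.1.right, ((hchar _).1 τ.2).1⟩,
        ⟨toAdd τ.1.left, ((hchar _).1 τ.2).2⟩⟩
      invFun := fun x => ⟨⟨ofAdd x.2.1, x.1.1⟩, (hchar _).2 ⟨x.1.2, x.2.2⟩⟩
      left_inv := fun _ => rfl
      right_inv := fun _ => rfl }
  have hQ : ∀ σ : P, Nat.card (Q σ) = 2 ^ k * Nat.choose (n - 2 * k) s :=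
    fun σ => ho_count_bits σ.1 σ.2.1 k s σ.2.2
  rw [Nat.card_congr E, Nat.card_sigma, Finset.sum_congr rfl fun σ _ => hQ σ]
  rw [Finset.sum_const, Finset.card_univ, smul_eq_mul, ← Nat.card_eq_fintype_card, ← mul_assoc]
  congr 1
  symm
  apply Nat.div_eq_of_eq_mul_left (by positivity)
  rw [← hcount]
  change _ = Nat.card P * _ * _
  ring
end

section
/- Let θ ∈ W be an involution with imaginary roots Δ_i = {α ∈ Δ : θα = α}, let ε be a grading of Δ_i, and let φ ∈ ℝⁿ be regular. Set ρ_i(φ) = (1/2)·∑_{α ∈ Δ_i, ⟪α,φ⟫ > 0} α and ρ_{ic}(φ) = (1/2)·∑_{α ∈ Δ_i, ε(α)=0, ⟪α,φ⟫ > 0} α. Then for every root α ∈ Δ, both ρ_i(φ) − ρ_i(s_α φ) and ρ_{ic}(φ) − ρ_{ic}(s_α φ) lie in the ℤ-span of Δ (i.e. each is an integral linear combination of roots). -/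
open scoped RealInnerProductSpace

noncomputable section

/-- Euclidean space `ℝⁿ`. -/
abbrev EucB (n : ℕ) := EuclideanSpace ℝ (Fin n)

/-- The `i`-th standard basis vector of `ℝⁿ`. -/
def eB (n : ℕ) (i : Fin n) : EucB n := EuclideanSpace.single i (1 : ℝ)

/-- The root system `Δ` of type `Bₙ`:
`{±eᵢ ± eⱼ : i < j} ∪ {±eᵢ}`. -/
def DeltaB (n : ℕ) : Set (EucB n) :=
  {v | (∃ i j : Fin n, i < j ∧
          (v = eB n i + eB n j ∨ v = eB n i - eB n j ∨
           v = -eB n i + eB n j ∨ v = -eB n i - eB n j)) ∨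
        ∃ i : Fin n, v = eB n i ∨ v = -eB n i}

/-- The positive system `Δ⁺ = {eᵢ ± eⱼ : i < j} ∪ {eᵢ}`. -/
def DeltaBpos (n : ℕ) : Set (EucB n) :=
  {v | (∃ i j : Fin n, i < j ∧ (v = eB n i + eB n j ∨ v = eB n i - eB n j)) ∨
        ∃ i : Fin n, v = eB n i}

/-- The coroot `α∨ = 2α/⟪α,α⟫`. -/
def corootB (n : ℕ) (α : EucB n) : EucB n := (2 / ⟪α, α⟫) • α

/-- The linear functional `x ↦ ⟪x, α∨⟫`. -/
def corootForm (n : ℕ) (α : EucB n) : Module.Dual ℝ (EucB n) where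
  toFun x := ⟪x, corootB n α⟫
  map_add' x y := inner_add_left _ _ _
  map_smul' c x := by simpa using real_inner_smul_left x (corootB n α) c

/-- The reflection `s_α(x) = x − ⟪x, α∨⟫ α` as a linear automorphism of `ℝⁿ`
(for `α` a root, the branch condition `⟪α, α∨⟫ = 2` holds). -/
def sReflB (n : ℕ) (α : EucB n) : EucB n ≃ₗ[ℝ] EucB n :=
  if h : corootForm n α α = 2 then Module.reflection h else LinearEquiv.refl ℝ (EucB n)

/-- The Weyl group `W(Bₙ)`, the subgroup of linear automorphisms of `ℝⁿ` generated by the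
reflections in the roots of `Δ`. -/
def WeylB (n : ℕ) : Subgroup (EucB n ≃ₗ[ℝ] EucB n) :=
  Subgroup.closure {g | ∃ α ∈ DeltaB n, g = sReflB n α}


/-- `ρ_i(φ)`: half the sum of the imaginary roots of `θ` that are positive with
respect to `φ`. -/
def rhoI (n : ℕ) (θ : EucB n ≃ₗ[ℝ] EucB n) (φ : EucB n) : EucB n :=
  (1 / 2 : ℝ) • ∑ᶠ α ∈ {α | α ∈ DeltaB n ∧ θ α = α ∧ 0 < ⟪α, φ⟫}, α

/-- `ρ_{ic}(φ)`: half the sum of the compact (`ε α = 0`) imaginary roots of `θ` that are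
positive with respect to `φ`. -/
def rhoIC (n : ℕ) (θ : EucB n ≃ₗ[ℝ] EucB n) (ε : EucB n → ZMod 2) (φ : EucB n) : EucB n :=
  (1 / 2 : ℝ) • ∑ᶠ α ∈ {α | α ∈ DeltaB n ∧ θ α = α ∧ ε α = 0 ∧ 0 < ⟪α, φ⟫}, α

theorem aux_finite (n : ℕ) : (DeltaB n).Finite := by
  have h : (⋃ i : Fin n, ⋃ j : Fin n, ({eB n i + eB n j, eB n i - eB n j, -eB n i + eB n j,
      -eB n i - eB n j, eB n i, -eB n i} : Set (EucB n))).Finite :=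
    Set.finite_iUnion fun i => Set.finite_iUnion fun j => Set.toFinite _
  refine h.subset ?_
  rintro v (⟨i, j, -, h⟩ | ⟨i, h⟩)
  · simp only [Set.mem_iUnion, Set.mem_insert_iff, Set.mem_singleton_iff]
    exact ⟨i, j, by tauto⟩
  · simp only [Set.mem_iUnion, Set.mem_insert_iff, Set.mem_singleton_iff]
    exact ⟨i, i, by tauto⟩

theorem aux_neg (n : ℕ) (v : EucB n) (hv : v ∈ DeltaB n) : -v ∈ DeltaB n := by
  rcases hv with ⟨i, j, hij, h⟩ | ⟨i, h⟩
  · refine Or.inl ⟨i, j, hij, ?_⟩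
    rcases h with rfl | rfl | rfl | rfl
    · right; right; right; abel
    · right; right; left; abel
    · right; left; abel
    · left; abel
  · refine Or.inr ⟨i, ?_⟩
    rcases h with rfl | rfl
    · right; rfl
    · left; simp

theorem aux_inner (n : ℕ) (φ : EucB n) (i : Fin n) : ⟪φ, eB n i⟫ = φ i := by
  simp [eB, EuclideanSpace.inner_single_right]

/-- Regularity in coordinates. -/
theorem aux_reg (n : ℕ) (φ : EucB n) : (∀ α ∈ DeltaB n, ⟪φ, α⟫ ≠ 0) ↔
    (∀ i, |φ i| ≠ 0) ∧ ∀ i j, i ≠ j → |φ i| ≠ |φ j| := by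
  constructor
  · intro h
    refine ⟨fun i => ?_, ?_⟩
    · have := h (eB n i) (Or.inr ⟨i, Or.inl rfl⟩)
      rw [aux_inner] at this
      simpa using this
    · have key : ∀ i j, i < j → |φ i| ≠ |φ j| := by
        intro i j hij he
        have h1 := h _ (Or.inl ⟨i, j, hij, Or.inl rfl⟩)
        have h2 := h _ (Or.inl ⟨i, j, hij, Or.inr (Or.inl rfl)⟩)
        rw [inner_add_right, aux_inner, aux_inner] at h1
        rw [inner_sub_right, aux_inner, aux_inner] at h2
        rcases abs_eq_abs.1 he with h | h
        · exact h2 (by linarith)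
        · exact h1 (by linarith)
      intro i j hij
      rcases lt_or_gt_of_ne hij with h | h
      · exact key i j h
      · exact (key j i h).symm
  · rintro ⟨h1, h2⟩ α (⟨i, j, hij, h⟩ | ⟨i, h⟩) h0
    · apply h2 i j hij.ne
      rw [abs_eq_abs]
      rcases h with rfl | rfl | rfl | rfl <;>
        simp only [inner_add_right, inner_sub_right, inner_neg_right, aux_inner] at h0
      · right; linarith
      · left; linarith
      · left; linarith
      · right; linarith
    · apply h1 i
      rcases h with rfl | rfl <;>
        simpa only [inner_neg_right, aux_inner, neg_eq_zero, abs_eq_zero] using h0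

theorem aux_refl (n : ℕ) (α φ : EucB n) (h : ⟪α, α⟫ ≠ 0) :
    sReflB n α φ = φ - (⟪φ, α⟫ * (2 / ⟪α, α⟫)) • α := by
  have h2 : corootForm n α α = 2 := by
    simp only [corootForm, corootB, LinearMap.coe_mk, AddHom.coe_mk, real_inner_smul_right]
    field_simp
  rw [sReflB, dif_pos h2, Module.reflection_apply]
  simp only [corootForm, corootB, LinearMap.coe_mk, AddHom.coe_mk, real_inner_smul_right]
  rw [mul_comm]

theorem aux_perm (n : ℕ) (α φ : EucB n) (hα : α ∈ DeltaB n) :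
    ∃ σ : Equiv.Perm (Fin n), ∀ k, |sReflB n α φ k| = |φ (σ k)| := by
  have e1 : ∀ i j : Fin n, eB n i j = if j = i then 1 else 0 := by
    intro i j; simp [eB]
  rcases hα with ⟨i, j, hij, h⟩ | ⟨i, h⟩
  · have h3 : ⟪α, α⟫ = 2 := by
      have := hij.ne
      have := hij.ne'
      rcases h with rfl | rfl | rfl | rfl <;>
        simp only [inner_add_right, inner_sub_right, inner_neg_right, aux_inner,
          PiLp.add_apply, PiLp.sub_apply, PiLp.neg_apply, e1] <;> simp [*] <;> norm_num
    refine ⟨Equiv.swap i j, fun k => ?_⟩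
    rw [aux_refl n α φ (by rw [h3]; norm_num), h3]
    have := hij.ne
    have := hij.ne'
    by_cases hki : k = i
    · subst hki
      rw [Equiv.swap_apply_left, abs_eq_abs]
      rcases h with rfl | rfl | rfl | rfl <;>
        simp [inner_add_right, inner_sub_right, inner_neg_right, aux_inner, e1, *]
    by_cases hkj : k = j
    · subst hkj
      rw [Equiv.swap_apply_right, abs_eq_abs]
      rcases h with rfl | rfl | rfl | rfl <;>
        simp [inner_add_right, inner_sub_right, inner_neg_right, aux_inner, e1, *]
    rw [Equiv.swap_apply_of_ne_of_ne hki hkj]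
    rcases h with rfl | rfl | rfl | rfl <;> simp [e1, *]
  · have h3 : ⟪α, α⟫ = 1 := by
      rcases h with rfl | rfl <;> simp [eB]
    refine ⟨1, fun k => ?_⟩
    rw [aux_refl n α φ (by rw [h3]; norm_num), h3, Equiv.Perm.one_apply, abs_eq_abs]
    by_cases hki : k = i
    · subst hki
      right
      rcases h with rfl | rfl <;> simp [aux_inner, e1] <;> ring
    · left
      rcases h with rfl | rfl <;> simp [e1, *]

theorem aux_reg_refl (n : ℕ) (α φ : EucB n) (hα : α ∈ DeltaB n)
    (hreg : ∀ α ∈ DeltaB n, ⟪φ, α⟫ ≠ 0) :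
    ∀ β ∈ DeltaB n, ⟪sReflB n α φ, β⟫ ≠ 0 := by
  rw [aux_reg] at hreg ⊢
  obtain ⟨σ, hσ⟩ := aux_perm n α φ hα
  refine ⟨fun i => ?_, fun i j hij => ?_⟩
  · rw [hσ]; exact hreg.1 _
  · rw [hσ, hσ]; exact hreg.2 _ _ (fun h => hij (σ.injective h))

theorem aux_main (n : ℕ) (S : Set (EucB n)) (hS : S ⊆ DeltaB n) (hneg : ∀ v ∈ S, -v ∈ S)
    (φ ψ : EucB n) (hφ : ∀ α ∈ DeltaB n, ⟪φ, α⟫ ≠ 0) (hψ : ∀ α ∈ DeltaB n, ⟪ψ, α⟫ ≠ 0) :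
    (1 / 2 : ℝ) • ∑ᶠ α ∈ {α | α ∈ S ∧ 0 < ⟪α, φ⟫}, α -
      (1 / 2 : ℝ) • ∑ᶠ α ∈ {α | α ∈ S ∧ 0 < ⟪α, ψ⟫}, α ∈ Submodule.span ℤ (DeltaB n) := by
  classical
  have hfin : S.Finite := (aux_finite n).subset hS
  set F := hfin.toFinset with hF
  have hmem : ∀ v, v ∈ F ↔ v ∈ S := fun v => hfin.mem_toFinset
  have hsum : ∀ χ : EucB n, ∑ᶠ α ∈ {α | α ∈ S ∧ 0 < ⟪α, χ⟫}, α =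
      ∑ α ∈ F, if 0 < ⟪α, χ⟫ then α else 0 := by
    intro χ
    rw [← Finset.sum_filter]
    rw [← finsum_mem_coe_finset]
    congr! 3 with v
    simp [hmem]
  rw [hsum, hsum]
  have hrefl : ∑ β ∈ F, (if 0 < ⟪β, φ⟫ ∧ ⟪β, ψ⟫ < 0 then β else 0) =
      ∑ β ∈ F, (if ⟪β, φ⟫ < 0 ∧ 0 < ⟪β, ψ⟫ then -β else 0) := by
    refine Finset.sum_nbij' (fun v => -v) (fun v => -v) ?_ ?_ ?_ ?_ ?_
    · intro v hv; rw [hmem] at *; exact hneg v hv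
    · intro v hv; rw [hmem] at *; exact hneg v hv
    · simp
    · simp
    · intro v hv; simp [inner_neg_left]
  have key : (1 / 2 : ℝ) • ∑ α ∈ F, (if 0 < ⟪α, φ⟫ then α else 0) -
      (1 / 2 : ℝ) • ∑ α ∈ F, (if 0 < ⟪α, ψ⟫ then α else 0) =
      ∑ β ∈ F, (if 0 < ⟪β, φ⟫ ∧ ⟪β, ψ⟫ < 0 then β else 0) := by
    have h2 : ∑ β ∈ F, (if 0 < ⟪β, φ⟫ ∧ ⟪β, ψ⟫ < 0 then β else 0) =
        (1 / 2 : ℝ) • (∑ β ∈ F, (if 0 < ⟪β, φ⟫ ∧ ⟪β, ψ⟫ < 0 then β else 0) +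
          ∑ β ∈ F, (if ⟪β, φ⟫ < 0 ∧ 0 < ⟪β, ψ⟫ then -β else 0)) := by
      rw [← hrefl, ← two_smul ℝ, smul_smul]; norm_num
    rw [h2, ← smul_sub, ← Finset.sum_sub_distrib, ← Finset.sum_add_distrib]
    congr 1
    refine Finset.sum_congr rfl fun β hβ => ?_
    have hβ' := hS ((hmem β).1 hβ)
    have a1 := hφ β hβ'
    have a2 := hψ β hβ'
    rw [real_inner_comm] at a1 a2
    rcases lt_or_gt_of_ne a1 with b1 | b1 <;> rcases lt_or_gt_of_ne a2 with b2 | b2 <;>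
      simp [b1, b2, b1.le, b2.le, not_lt.2 b1.le, not_lt.2 b2.le]
  rw [key]
  refine Submodule.sum_mem _ fun β hβ => ?_
  split_ifs
  · exact Submodule.subset_span (hS ((hmem β).1 hβ))
  · exact Submodule.zero_mem _

/-- For an involution `θ ∈ W(Bₙ)` with a grading `ε` of its imaginary roots, a regular
element `φ`, and any root `α ∈ Δ`, both `ρ_i(φ) − ρ_i(s_α φ)` and
`ρ_{ic}(φ) − ρ_{ic}(s_α φ)` are integral linear combinations of roots. -/
theorem rho_difference_in_root_lattice (n : ℕ) (hn : 0 < n)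
    (θ : EucB n ≃ₗ[ℝ] EucB n) (hθW : θ ∈ WeylB n) (hθ2 : θ * θ = 1)
    (ε : EucB n → ZMod 2)
    (hε1 : ∀ α, α ∈ DeltaB n → θ α = α → ε (-α) = ε α)
    (hε2 : ∀ α β : EucB n, α ∈ DeltaB n → θ α = α → β ∈ DeltaB n → θ β = β →
      α + β ∈ DeltaB n → θ (α + β) = α + β → ε (α + β) = ε α + ε β)
    (φ : EucB n) (hreg : ∀ α ∈ DeltaB n, ⟪φ, α⟫ ≠ 0)
    (α : EucB n) (hα : α ∈ DeltaB n) :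
    rhoI n θ φ - rhoI n θ (sReflB n α φ) ∈ Submodule.span ℤ (DeltaB n) ∧
    rhoIC n θ ε φ - rhoIC n θ ε (sReflB n α φ) ∈ Submodule.span ℤ (DeltaB n) := by
  have hψ := aux_reg_refl n α φ hα hreg
  constructor
  · have := aux_main n {v | v ∈ DeltaB n ∧ θ v = v} (fun v hv => hv.1)
      (fun v hv => ⟨aux_neg n v hv.1, by rw [map_neg, hv.2]⟩) φ _ hreg hψ
    simpa only [rhoI, Set.mem_setOf_eq, and_assoc] using this
  · have := aux_main n {v | v ∈ DeltaB n ∧ θ v = v ∧ ε v = 0} (fun v hv => hv.1)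
      (fun v hv => ⟨aux_neg n v hv.1, by rw [map_neg, hv.2.1],
        by rw [hε1 v hv.1 hv.2.1, hv.2.2]⟩) φ _ hreg hψ
    simpa only [rhoIC, Set.mem_setOf_eq, and_assoc] using this
end
end

section
/- Let λ ∈ ℝⁿ be regular and half-integral (⟪λ, α∨⟫ ∈ (1/2)ℤ for every α ∈ Δ), let θ ∈ W be an involution, and let ε be a grading of the imaginary roots Δ_i(θ) = {α : θα = α}. Call the triple (θ, ε, λ) supportable if: for every long imaginary root α, ⟪λ, α∨⟫ ∈ ℤ when ε(α) = 0 and ⟪λ, α∨⟫ ∈ ℤ + 1/2 when ε(α) = 1; and for every long complex root α (θα ≠ ±α), ⟪λ, α∨ + θ(α∨)⟫ ∈ ℤ when ⟪α, θ(α∨)⟫ = 0 and ⟪λ, α∨ + θ(α∨)⟫ ∈ ℤ + 1/2 when ⟪α, θ(α∨)⟫ ≠ 0. Let W(λ) = {w ∈ W : wλ − λ lies in the ℤ-span of Δ} be the integral Weyl group. Then for every w ∈ W(λ): if (θ, ε, λ) is supportable, so is (wθw⁻¹, w×ε, λ), where (w×ε)(α) = ε(w⁻¹α) for α imaginary for wθw⁻¹.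 -/
open scoped RealInnerProductSpace

noncomputable section

/-- A real number is an integer. -/
def IsIntR (x : ℝ) : Prop := ∃ m : ℤ, x = m

/-- A real number is a strict half-integer (an element of `ℤ + 1/2`). -/
def IsStrictHalfIntR (x : ℝ) : Prop := ∃ m : ℤ, x = m + 1 / 2

/-- The triple `(θ, ε, λ)` is supportable: for every long imaginary root `α`,
`⟪λ, α∨⟫ ∈ ℤ` when `ε α = 0` and `⟪λ, α∨⟫ ∈ ℤ + 1/2` when `ε α = 1`; and for every long
complex root `α`, `⟪λ, α∨ + θ(α∨)⟫ ∈ ℤ` when `⟪α, θ(α∨)⟫ = 0` and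
`⟪λ, α∨ + θ(α∨)⟫ ∈ ℤ + 1/2` when `⟪α, θ(α∨)⟫ ≠ 0`. -/
def SupportableB (n : ℕ) (θ : EucB n ≃ₗ[ℝ] EucB n) (ε : EucB n → ZMod 2)
    (lam : EucB n) : Prop :=
  (∀ α, α ∈ DeltaB n → ⟪α, α⟫ = (2 : ℝ) → θ α = α →
    ((ε α = 0 → IsIntR ⟪lam, corootB n α⟫) ∧
     (ε α = 1 → IsStrictHalfIntR ⟪lam, corootB n α⟫))) ∧
  (∀ α, α ∈ DeltaB n → ⟪α, α⟫ = (2 : ℝ) → θ α ≠ α → θ α ≠ -α →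
    ((⟪α, θ (corootB n α)⟫ = 0 → IsIntR ⟪lam, corootB n α + θ (corootB n α)⟫) ∧
     (⟪α, θ (corootB n α)⟫ ≠ 0 →
        IsStrictHalfIntR ⟪lam, corootB n α + θ (corootB n α)⟫)))

/-- A vector with integer coordinates. -/
def IntegralVec (n : ℕ) (v : EucB n) : Prop := ∀ i, ∃ m : ℤ, v i = m

theorem IntegralVec.add {n : ℕ} {u v : EucB n} (hu : IntegralVec n u) (hv : IntegralVec n v) :
    IntegralVec n (u + v) := by
  intro i
  obtain ⟨a, ha⟩ := hu i
  obtain ⟨b, hb⟩ := hv i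
  exact ⟨a + b, by simp [ha, hb]⟩

theorem IntegralVec.neg {n : ℕ} {u : EucB n} (hu : IntegralVec n u) :
    IntegralVec n (-u) := by
  intro i
  obtain ⟨a, ha⟩ := hu i
  exact ⟨-a, by simp [ha]⟩

theorem IntegralVec.sub {n : ℕ} {u v : EucB n} (hu : IntegralVec n u) (hv : IntegralVec n v) :
    IntegralVec n (u - v) := by
  rw [sub_eq_add_neg]
  exact hu.add hv.neg

theorem IntegralVec.smul {n : ℕ} {u : EucB n} (hu : IntegralVec n u) (k : ℤ) :
    IntegralVec n ((k : ℝ) • u) := by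
  intro i
  obtain ⟨a, ha⟩ := hu i
  exact ⟨k * a, by simp [ha]⟩

theorem integralVec_eB (n : ℕ) (i : Fin n) : IntegralVec n (eB n i) := by
  intro j
  by_cases h : j = i
  · exact ⟨1, by simp [eB, h]⟩
  · exact ⟨0, by simp [eB, h]⟩

theorem IntegralVec.inner {n : ℕ} {u v : EucB n} (hu : IntegralVec n u) (hv : IntegralVec n v) :
    ∃ m : ℤ, ⟪u, v⟫ = (m : ℝ) := by
  choose a ha using hu
  choose b hb using hv
  refine ⟨∑ i, b i * a i, ?_⟩
  rw [PiLp.inner_apply]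
  push_cast
  exact Finset.sum_congr rfl fun i _ => by simp [ha, hb]

theorem integralVec_of_mem {n : ℕ} {v : EucB n} (hv : v ∈ DeltaB n) : IntegralVec n v := by
  have h := integralVec_eB n
  rcases hv with ⟨i, j, -, rfl | rfl | rfl | rfl⟩ | ⟨i, rfl | rfl⟩
  · exact (h i).add (h j)
  · exact (h i).sub (h j)
  · exact (h i).neg.add (h j)
  · exact (h i).neg.sub (h j)
  · exact h i
  · exact (h i).neg

theorem integralVec_of_span {n : ℕ} {v : EucB n}
    (hv : v ∈ Submodule.span ℤ (DeltaB n)) : IntegralVec n v := by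
  induction hv using Submodule.span_induction with
  | mem x hx => exact integralVec_of_mem hx
  | zero => exact fun i => ⟨0, by simp⟩
  | add x y _ _ hx hy => exact hx.add hy
  | smul a x _ hx =>
    have := hx.smul a
    rwa [Int.cast_smul_eq_zsmul] at this

theorem eB_inner (n : ℕ) (i j : Fin n) : ⟪eB n i, eB n j⟫ = if i = j then (1 : ℝ) else 0 := by
  by_cases h : i = j
  · subst h; simp [eB]
  · simp [eB, h, EuclideanSpace.inner_single_left]

theorem norm_root {n : ℕ} {v : EucB n} (hv : v ∈ DeltaB n) :
    ⟪v, v⟫ = (1 : ℝ) ∨ ⟪v, v⟫ = (2 : ℝ) := by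
  rcases hv with ⟨i, j, hij, rfl | rfl | rfl | rfl⟩ | ⟨i, rfl | rfl⟩
  all_goals
    simp only [inner_add_left, inner_add_right, inner_sub_left, inner_sub_right, inner_neg_left,
      inner_neg_right, eB_inner]
  · simp [hij.ne, hij.ne']; norm_num
  · simp [hij.ne, hij.ne']; norm_num
  · simp [hij.ne, hij.ne']; norm_num
  · simp [hij.ne, hij.ne']; norm_num
  · simp
  · simp

theorem integralVec_coroot {n : ℕ} {v : EucB n} (hv : v ∈ DeltaB n) :
    IntegralVec n (corootB n v) := by
  unfold corootB
  rcases norm_root hv with h | h <;> rw [h]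
  · simpa using (integralVec_of_mem hv).smul 2
  · simpa using integralVec_of_mem hv

theorem weyl_props {n : ℕ} {g : EucB n ≃ₗ[ℝ] EucB n} (hg : g ∈ WeylB n) :
    (∀ x y, ⟪g x, g y⟫ = ⟪x, y⟫) ∧ (∀ x, IntegralVec n x → IntegralVec n (g x)) := by
  have hgen : ∀ α ∈ DeltaB n, (∀ x y, ⟪sReflB n α x, sReflB n α y⟫ = ⟪x, y⟫) ∧
      (∀ x, IntegralVec n x → IntegralVec n (sReflB n α x)) := by
    intro α hα
    have hne : ⟪α, α⟫ ≠ 0 := by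
      rcases norm_root hα with h | h <;> rw [h] <;> norm_num
    have h2 : corootForm n α α = 2 := by
      change ⟪α, corootB n α⟫ = 2
      rw [corootB, real_inner_smul_right]
      field_simp
    have happ : ∀ x, sReflB n α x = x - ⟪x, corootB n α⟫ • α := by
      intro x
      rw [sReflB, dif_pos h2, Module.reflection_apply]
      rfl
    constructor
    · intro x y
      rw [happ, happ]
      simp only [corootB, inner_sub_left, inner_sub_right, real_inner_smul_left,
        real_inner_smul_right]
      rw [real_inner_comm y α]
      field_simp
      ring
    · intro x hx
      rw [happ]
      obtain ⟨m, hm⟩ := hx.inner (integralVec_coroot hα)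
      rw [hm]
      exact hx.sub ((integralVec_of_mem hα).smul m)
  have hinv : ∀ α ∈ DeltaB n, (sReflB n α)⁻¹ = sReflB n α := by
    intro α _
    unfold sReflB
    split_ifs with h
    · rw [inv_eq_iff_mul_eq_one]
      ext1 x
      exact Module.involutive_reflection h x
    · rfl
  unfold WeylB at hg
  induction hg using Subgroup.closure_induction'' with
  | one => exact ⟨fun _ _ => rfl, fun _ h => h⟩
  | mem x hx =>
    obtain ⟨α, hα, rfl⟩ := hx
    exact hgen α hα
  | inv_mem x hx =>
    obtain ⟨α, hα, rfl⟩ := hx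
    rw [hinv α hα]
    exact hgen α hα
  | mul x y _ _ hx hy =>
    refine ⟨fun u v => ?_, fun u hu => hx.2 _ (hy.2 _ hu)⟩
    rw [LinearEquiv.mul_apply, LinearEquiv.mul_apply, hx.1, hy.1]

theorem integral_split {n : ℕ} {v : EucB n} (hv : IntegralVec n v) (k : ℕ)
    (hk : ⟪v, v⟫ = (k : ℝ)) (h0 : 0 < k) (h2 : k ≤ 2) :
    ∃ i, (v i = 1 ∨ v i = -1) ∧ IntegralVec n (v - v i • eB n i) ∧ (v - v i • eB n i) i = 0 ∧
      ⟪v - v i • eB n i, v - v i • eB n i⟫ = ((k : ℝ) - 1) := by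
  have hex : ∃ i, v i ≠ 0 := by
    by_contra! h
    have : v = 0 := by ext i; simpa using h i
    rw [this, inner_zero_left] at hk
    have : k = 0 := by exact_mod_cast hk.symm
    omega
  obtain ⟨i, hi⟩ := hex
  obtain ⟨m, hm⟩ := hv i
  have hve : ⟪v, eB n i⟫ = v i := by simp [eB, EuclideanSpace.inner_single_right]
  have hnorm : ⟪v - v i • eB n i, v - v i • eB n i⟫ = (k : ℝ) - v i ^ 2 := by
    simp only [inner_sub_left, inner_sub_right, real_inner_smul_left, real_inner_smul_right,
      eB_inner, real_inner_comm v (eB n i), hve, hk]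
    simp
    ring
  have hnn : (0 : ℝ) ≤ (k : ℝ) - v i ^ 2 := by
    rw [← hnorm]; exact real_inner_self_nonneg
  have hm0 : m ≠ 0 := by rintro rfl; simp [hm] at hi
  have hm2 : m ^ 2 ≤ 2 := by
    have : (m : ℝ) ^ 2 ≤ 2 := by
      have : (k : ℝ) ≤ 2 := by exact_mod_cast h2
      rw [hm] at hnn; linarith
    exact_mod_cast this
  have hm1 : m = 1 ∨ m = -1 := by
    have : m ≤ 1 := by nlinarith
    have : -1 ≤ m := by nlinarith
    omega
  refine ⟨i, ?_, ?_, ?_, ?_⟩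
  · rcases hm1 with rfl | rfl <;> simp [hm]
  · rw [hm]; exact hv.sub ((integralVec_eB n i).smul m)
  · simp [eB]
  · rw [hnorm, hm]
    rcases hm1 with rfl | rfl <;> norm_num

theorem mem_of_integral {n : ℕ} {v : EucB n} (hv : IntegralVec n v) (h : ⟪v, v⟫ = (2 : ℝ)) :
    v ∈ DeltaB n := by
  obtain ⟨i, hi, hI, hz, hN⟩ := integral_split hv 2 (by simpa using h) (by norm_num) le_rfl
  set u := v - v i • eB n i with hu
  obtain ⟨j, hj, -, -, hN'⟩ := integral_split hI 1 (by rw [hN]; norm_num) (by norm_num)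
    (by norm_num)
  have h0 : u - u j • eB n j = 0 := by
    rw [← inner_self_eq_zero (𝕜 := ℝ), hN']; norm_num
  have hij : i ≠ j := by
    rintro rfl
    rw [hz] at hj; norm_num at hj
  have hv' : v = v i • eB n i + u j • eB n j := by
    rw [← sub_eq_zero.mp h0, hu]; abel
  generalize v i = a at *
  generalize u j = b at *
  left
  rcases lt_or_gt_of_ne hij with hlt | hlt
  · refine ⟨i, j, hlt, ?_⟩
    rcases hi with rfl | rfl <;> rcases hj with rfl | rfl <;> simp [hv', sub_eq_add_neg]
  · refine ⟨j, i, hlt, ?_⟩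
    rw [add_comm] at hv'
    rcases hi with rfl | rfl <;> rcases hj with rfl | rfl <;> simp [hv', sub_eq_add_neg]

theorem coroot_long {n : ℕ} {α : EucB n} (h : ⟪α, α⟫ = (2 : ℝ)) : corootB n α = α := by
  rw [corootB, h]; simp

theorem IsIntR.sub_int {x : ℝ} (h : IsIntR x) (k : ℤ) : IsIntR (x - k) := by
  obtain ⟨m, rfl⟩ := h
  exact ⟨m - k, by push_cast; ring⟩

theorem IsStrictHalfIntR.sub_int {x : ℝ} (h : IsStrictHalfIntR x) (k : ℤ) :
    IsStrictHalfIntR (x - k) := by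
  obtain ⟨m, rfl⟩ := h
  exact ⟨m - k, by push_cast; ring⟩

/-- Let `λ` be regular and half-integral, `θ ∈ W(Bₙ)` an involution, and `ε` a grading of
the imaginary roots of `θ`.  For every element `w` of the integral Weyl group `W(λ)`
(elements of `W` with `wλ − λ` in the `ℤ`-span of `Δ`): if `(θ, ε, λ)` is supportable,
then so is the cross-acted triple `(wθw⁻¹, w×ε, λ)`, where `(w×ε)(α) = ε(w⁻¹α)`. -/
theorem supportable_cross_action (n : ℕ) (hn : 0 < n)
    (lam : EucB n)
    (hreg : ∀ α ∈ DeltaB n, ⟪lam, α⟫ ≠ 0)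
    (hhalf : ∀ α ∈ DeltaB n, ∃ m : ℤ, ⟪lam, corootB n α⟫ = m / 2)
    (θ : EucB n ≃ₗ[ℝ] EucB n) (hθW : θ ∈ WeylB n) (hθ2 : θ * θ = 1)
    (ε : EucB n → ZMod 2)
    (hε1 : ∀ α, α ∈ DeltaB n → θ α = α → ε (-α) = ε α)
    (hε2 : ∀ α β : EucB n, α ∈ DeltaB n → θ α = α → β ∈ DeltaB n → θ β = β →
      α + β ∈ DeltaB n → ε (α + β) = ε α + ε β)
    (w : EucB n ≃ₗ[ℝ] EucB n) (hwW : w ∈ WeylB n)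
    (hwint : w lam - lam ∈ Submodule.span ℤ (DeltaB n))
    (hsupp : SupportableB n θ ε lam) :
    SupportableB n (w * θ * w⁻¹) (fun α => ε (w⁻¹ α)) lam := by
  obtain ⟨hwi, hwI⟩ := weyl_props hwW
  obtain ⟨hwi', hwI'⟩ := weyl_props ((WeylB n).inv_mem hwW)
  obtain ⟨hti, htI⟩ := weyl_props hθW
  have hww : ∀ x, w (w⁻¹ x) = x := fun x => by
    rw [← LinearEquiv.mul_apply, mul_inv_cancel]; rfl
  have hμ := integralVec_of_span hwint
  have key : ∀ β, IntegralVec n β → ∃ k : ℤ, ⟪lam, w β⟫ = ⟪lam, β⟫ - k := by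
    intro β hβ
    obtain ⟨k, hk⟩ := hμ.inner (hwI β hβ)
    refine ⟨k, ?_⟩
    rw [← hk, inner_sub_left, hwi]
    ring
  obtain ⟨h1, h2⟩ := hsupp
  constructor
  · intro α hα hl him
    obtain ⟨β, rfl⟩ : ∃ β, α = w β := ⟨w⁻¹ α, (hww α).symm⟩
    have hwb : w⁻¹ (w β) = β := w.injective (hww _)
    have hIβ : IntegralVec n β := hwb ▸ hwI' _ (integralVec_of_mem hα)
    have hlβ : ⟪β, β⟫ = (2 : ℝ) := by rw [← hl, hwi]
    have him' : θ β = β := by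
      rw [LinearEquiv.mul_apply, LinearEquiv.mul_apply, hwb] at him
      exact w.injective him
    have := h1 β (mem_of_integral hIβ hlβ) hlβ him'
    rw [coroot_long hlβ] at this
    rw [coroot_long hl]
    simp only [hwb]
    obtain ⟨k, hk⟩ := key β hIβ
    rw [hk]
    exact ⟨fun h => (this.1 h).sub_int k, fun h => (this.2 h).sub_int k⟩
  · intro α hα hl hn1 hn2
    obtain ⟨β, rfl⟩ : ∃ β, α = w β := ⟨w⁻¹ α, (hww α).symm⟩
    have hwb : w⁻¹ (w β) = β := w.injective (hww _)
    have hIβ : IntegralVec n β := hwb ▸ hwI' _ (integralVec_of_mem hα)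
    have hlβ : ⟪β, β⟫ = (2 : ℝ) := by rw [← hl, hwi]
    rw [LinearEquiv.mul_apply, LinearEquiv.mul_apply, hwb] at hn1 hn2
    have := h2 β (mem_of_integral hIβ hlβ) hlβ (fun h => hn1 (by rw [h]))
      (fun h => hn2 (by rw [h, map_neg]))
    rw [coroot_long hlβ] at this
    rw [coroot_long hl, LinearEquiv.mul_apply, LinearEquiv.mul_apply, hwb, hwi, ← map_add]
    obtain ⟨k, hk⟩ := key (β + θ β) (hIβ.add (htI β hIβ))
    rw [hk]
    exact ⟨fun h => (this.1 h).sub_int k, fun h => (this.2 h).sub_int k⟩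
end
end

section
/- In the notation of the context, let w ∈ W_i and let (β₁,…,β_N) and (β'₁,…,β'_M) be two words in Π_i with w = s_{β_N}⋯s_{β₁} = s_{β'_M}⋯s_{β'₁}, both of minimal length among all expressions of w as a product of reflections in elements of Π_i (so N = M). Then S(β₁,…,β_N) = S(β'₁,…,β'_M) in M_θ. Hence there is a well-defined map w ↦ m_ε(w) from W_i to M_θ given by m_ε(w) = S(β₁,…,β_N) for any reduced expression of w. -/
open scoped RealInnerProductSpace

set_option synthInstance.maxHeartbeats 1000000

noncomputable section

/-- The coroot lattice `Q∨`, the `ℤ`-span of the coroots. -/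
def QvB (n : ℕ) : Submodule ℤ (EucB n) :=
  Submodule.span ℤ {v | ∃ α ∈ DeltaB n, v = corootB n α}

/-- The submodule `2Q∨` of `Q∨`. -/
def twoQB (n : ℕ) : Submodule ℤ ↥(QvB n) :=
  LinearMap.range ((2 : ℤ) • (LinearMap.id : ↥(QvB n) →ₗ[ℤ] ↥(QvB n)))

/-- The quotient `Q∨/2Q∨`. -/
abbrev QModB (n : ℕ) := ↥(QvB n) ⧸ twoQB n

/-- The quotient map `π : Q∨ → Q∨/2Q∨`. -/
def piQ (n : ℕ) : ↥(QvB n) →ₗ[ℤ] QModB n := (twoQB n).mkQ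

/-- The `θ`-fixed vectors of `Q∨`. -/
def fixedQ (n : ℕ) (θ : EucB n ≃ₗ[ℝ] EucB n) : Submodule ℤ ↥(QvB n) where
  carrier := {v | θ (v : EucB n) = (v : EucB n)}
  add_mem' := by
    intro a b ha hb
    simp only [Set.mem_setOf_eq, Submodule.coe_add, map_add] at *
    rw [ha, hb]
  zero_mem' := by simp
  smul_mem' := by
    intro c a ha
    simp only [Set.mem_setOf_eq, Submodule.coe_smul, map_zsmul] at *
    rw [ha]

/-- The `θ`-antifixed vectors of `Q∨` (those with `θv = −v`). -/
def negQ (n : ℕ) (θ : EucB n ≃ₗ[ℝ] EucB n) : Submodule ℤ ↥(QvB n) where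
  carrier := {v | θ (v : EucB n) = -(v : EucB n)}
  add_mem' := by
    intro a b ha hb
    simp only [Set.mem_setOf_eq, Submodule.coe_add, map_add] at *
    rw [ha, hb]; abel
  zero_mem' := by simp
  smul_mem' := by
    intro c a ha
    simp only [Set.mem_setOf_eq, Submodule.coe_smul, map_zsmul] at *
    rw [ha, smul_neg]

/-- `A₋ = π({v ∈ Q∨ : θv = v})`. -/
def AmB (n : ℕ) (θ : EucB n ≃ₗ[ℝ] EucB n) : Submodule ℤ (QModB n) :=
  (fixedQ n θ).map (piQ n)

/-- `A₊ = π({v ∈ Q∨ : θv = −v})`. -/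
def ApB (n : ℕ) (θ : EucB n ≃ₗ[ℝ] EucB n) : Submodule ℤ (QModB n) :=
  (negQ n θ).map (piQ n)

/-- `M_θ = A₋/(A₋ ∩ A₊)`. -/
abbrev MthB (n : ℕ) (θ : EucB n ≃ₗ[ℝ] EucB n) :=
  ↥(AmB n θ) ⧸ (ApB n θ).comap (AmB n θ).subtype

open Classical in
/-- `m_β ∈ M_θ`, the class of `π(β∨)` (defined when `β∨ ∈ Q∨` is fixed by `θ`,
e.g. for `β` an imaginary root). -/
def mB (n : ℕ) (θ : EucB n ≃ₗ[ℝ] EucB n) (β : EucB n) : MthB n θ :=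
  if h : corootB n β ∈ QvB n ∧ θ (corootB n β) = corootB n β then
    Submodule.Quotient.mk
      ⟨piQ n ⟨corootB n β, h.1⟩,
        Submodule.mem_map_of_mem (p := fixedQ n θ) (by exact h.2)⟩
  else 0

/-- The imaginary roots of `θ` that are positive. -/
def ImPosB (n : ℕ) (θ : EucB n ≃ₗ[ℝ] EucB n) : Set (EucB n) :=
  {α | α ∈ DeltaBpos n ∧ θ α = α}

/-- The simple roots `Π_i` of the positive imaginary system: positive imaginary roots
that are not sums of two positive imaginary roots. -/
def SimpleImB (n : ℕ) (θ : EucB n ≃ₗ[ℝ] EucB n) : Set (EucB n) :=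
  {β | β ∈ ImPosB n θ ∧ ¬∃ γ δ : EucB n, γ ∈ ImPosB n θ ∧ δ ∈ ImPosB n θ ∧ β = γ + δ}

/-- The product `s_{β_N}⋯s_{β₁}` of the reflections of a word `(β₁, …, β_N)`. -/
def wordProdB (n : ℕ) (L : List (EucB n)) : EucB n ≃ₗ[ℝ] EucB n :=
  ((L.map (sReflB n)).reverse).prod

/-- `S(β₁,…,β_N) = ∑_j ε(s_{β₁}⋯s_{β_{j−1}}(β_j)) · m_{β_j}`, computed with an
accumulator recording the prefix product `s_{β₁}⋯s_{β_{j−1}}`. -/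
def SwordB (n : ℕ) (θ : EucB n ≃ₗ[ℝ] EucB n) (ε : EucB n → ZMod 2) :
    (EucB n ≃ₗ[ℝ] EucB n) → List (EucB n) → MthB n θ
  | _, [] => 0
  | acc, β :: rest =>
      (ε (acc β)).val • mB n θ β + SwordB n θ ε (acc * sReflB n β) rest

theorem eB_apply' (n : ℕ) (i j : Fin n) : (eB n i) j = if j = i then (1:ℝ) else 0 := by
  simp [eB, EuclideanSpace.single_apply]

theorem inner_eB (n : ℕ) (x : EucB n) (i : Fin n) : ⟪x, eB n i⟫ = x i := by
  simp [eB, EuclideanSpace.inner_single_right]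

theorem inner_eB' (n : ℕ) (x : EucB n) (i : Fin n) : ⟪eB n i, x⟫ = x i := by
  rw [real_inner_comm, inner_eB]

theorem eB_ne_zero (n : ℕ) (i : Fin n) : eB n i ≠ 0 := by
  intro h
  have := congrArg (fun v : EucB n => v i) h
  simp [eB_apply'] at this

/-- unordered description of the roots -/
theorem mem_DeltaB_iff (n : ℕ) (v : EucB n) : v ∈ DeltaB n ↔
    (∃ i j : Fin n, i ≠ j ∧ ∃ s t : ℝ, (s = 1 ∨ s = -1) ∧ (t = 1 ∨ t = -1) ∧
      v = s • eB n i + t • eB n j) ∨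
    ∃ i : Fin n, ∃ s : ℝ, (s = 1 ∨ s = -1) ∧ v = s • eB n i := by
  constructor
  · rintro (⟨i, j, hij, h⟩ | ⟨i, h⟩)
    · left
      refine ⟨i, j, hij.ne, ?_⟩
      rcases h with h | h | h | h
      · exact ⟨1, 1, by simp, by simp, by rw [h]; module⟩
      · exact ⟨1, -1, by simp, by simp, by rw [h]; module⟩
      · exact ⟨-1, 1, by simp, by simp, by rw [h]; module⟩
      · exact ⟨-1, -1, by simp, by simp, by rw [h]; module⟩
    · right
      refine ⟨i, ?_⟩
      rcases h with h | h
      · exact ⟨1, by simp, by rw [h]; module⟩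
      · exact ⟨-1, by simp, by rw [h]; module⟩
  · rintro (⟨i, j, hij, s, t, hs, ht, rfl⟩ | ⟨i, s, hs, rfl⟩)
    · left
      rcases lt_or_gt_of_ne hij with hlt | hlt
      · refine ⟨i, j, hlt, ?_⟩
        rcases hs with rfl | rfl <;> rcases ht with rfl | rfl
        · left; module
        · right; left; module
        · right; right; left; module
        · right; right; right; module
      · refine ⟨j, i, hlt, ?_⟩
        rcases hs with rfl | rfl <;> rcases ht with rfl | rfl
        · left; module
        · right; right; left; module
        · right; left; module
        · right; right; right; module
    · right
      refine ⟨i, ?_⟩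
      rcases hs with rfl | rfl
      · left; module
      · right; module

theorem DeltaB_ne_zero (n : ℕ) {β : EucB n} (hβ : β ∈ DeltaB n) : β ≠ 0 := by
  rcases (mem_DeltaB_iff n β).1 hβ with ⟨i, j, hij, s, t, hs, ht, rfl⟩ | ⟨i, s, hs, rfl⟩
  · intro h
    have := congrArg (fun v : EucB n => v i) h
    simp [eB_apply', hij] at this
    rcases hs with rfl | rfl <;> norm_num at this
  · intro h
    have := congrArg (fun v : EucB n => v i) h
    simp [eB_apply'] at this
    rcases hs with rfl | rfl <;> norm_num at this

theorem sReflB_apply (n : ℕ) {β : EucB n} (hβ : β ≠ 0) (x : EucB n) :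
    sReflB n β x = x - (⟪x, corootB n β⟫ : ℝ) • β := by
  have h0 : ⟪β, β⟫ ≠ 0 := by simpa using hβ
  have h : corootForm n β β = 2 := by
    change ⟪β, corootB n β⟫ = 2
    rw [corootB, real_inner_smul_right]
    field_simp
  rw [sReflB, dif_pos h, Module.reflection_apply]
  rfl

theorem sReflB_apply' (n : ℕ) {β : EucB n} (hβ : β ≠ 0) (x : EucB n) :
    sReflB n β x = x - (⟪x, β⟫ : ℝ) • corootB n β := by
  rw [sReflB_apply n hβ, corootB, real_inner_smul_right, smul_smul, mul_comm]

theorem sReflB_adj (n : ℕ) {β : EucB n} (hβ : β ≠ 0) (x y : EucB n) :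
    ⟪sReflB n β x, y⟫ = ⟪x, sReflB n β y⟫ := by
  rw [sReflB_apply n hβ, sReflB_apply n hβ, corootB]
  simp only [inner_sub_left, inner_sub_right, real_inner_smul_left, real_inner_smul_right]
  rw [real_inner_comm β y]
  ring

theorem sReflB_sq (n : ℕ) (β : EucB n) : sReflB n β * sReflB n β = 1 := by
  ext1 x
  unfold sReflB
  split_ifs with h
  · exact Module.involutive_reflection h x
  · rfl

/-- signed permutation -/
def SgnP (n : ℕ) (g : EucB n ≃ₗ[ℝ] EucB n) : Prop :=
  ∀ k, ∃ l, ∃ s : ℝ, (s = 1 ∨ s = -1) ∧ g (eB n k) = s • eB n l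

theorem SgnP_one (n : ℕ) : SgnP n 1 := fun k => ⟨k, 1, by simp, by simp⟩

theorem sgn_mul {s t : ℝ} (hs : s = 1 ∨ s = -1) (ht : t = 1 ∨ t = -1) :
    s * t = 1 ∨ s * t = -1 := by
  rcases hs with rfl | rfl <;> rcases ht with rfl | rfl <;> norm_num

theorem SgnP_mul (n : ℕ) {g h : EucB n ≃ₗ[ℝ] EucB n} (hg : SgnP n g) (hh : SgnP n h) :
    SgnP n (g * h) := by
  intro k
  obtain ⟨l, s, hs, e⟩ := hh k
  obtain ⟨m, t, ht, e'⟩ := hg l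
  refine ⟨m, s * t, sgn_mul hs ht, ?_⟩
  rw [LinearEquiv.mul_apply, e, map_smul, e', smul_smul]

theorem SgnP_refl (n : ℕ) {β : EucB n} (hβ : β ∈ DeltaB n) : SgnP n (sReflB n β) := by
  intro k
  have h0 := DeltaB_ne_zero n hβ
  rw [sReflB_apply' n h0, inner_eB', corootB]
  rcases (mem_DeltaB_iff n β).1 hβ with ⟨i, j, hij, s, t, hs, ht, rfl⟩ | ⟨i, s, hs, rfl⟩
  · have hn : ⟪s • eB n i + t • eB n j, s • eB n i + t • eB n j⟫ = 2 := by
      simp only [inner_add_right, real_inner_smul_right, inner_eB]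
      simp [eB_apply', hij, hij.symm]
      rcases hs with rfl | rfl <;> rcases ht with rfl | rfl <;> norm_num
    rw [hn]
    have hs2 : s * s = 1 := by rcases hs with rfl | rfl <;> norm_num
    have ht2 : t * t = 1 := by rcases ht with rfl | rfl <;> norm_num
    have hst : -(s * t) = 1 ∨ -(s * t) = -1 := by
      rcases hs with rfl | rfl <;> rcases ht with rfl | rfl <;> norm_num
    by_cases hki : k = i
    · subst hki
      refine ⟨j, -(s * t), hst, ?_⟩
      simp [eB_apply', hij]
      simp only [smul_smul, hs2]
      module
    · by_cases hkj : k = j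
      · subst hkj
        refine ⟨i, -(s * t), hst, ?_⟩
        simp [eB_apply', hki]
        simp only [smul_smul, ht2]
        rw [mul_comm t s]
        module
      · refine ⟨k, 1, by simp, ?_⟩
        simp [eB_apply', hki, hkj]
  · have hn : ⟪s • eB n i, s • eB n i⟫ = 1 := by
      simp only [real_inner_smul_right, inner_eB]
      simp [eB_apply']
      rcases hs with rfl | rfl <;> norm_num
    rw [hn]
    have hs2 : s * s = 1 := by rcases hs with rfl | rfl <;> norm_num
    by_cases hki : k = i
    · subst hki
      refine ⟨k, -1, by simp, ?_⟩
      have : s * (2 * s) = 2 := by linarith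
      simp [eB_apply', smul_smul, this]
      module
    · refine ⟨k, 1, by simp, ?_⟩
      simp [eB_apply', hki]

theorem SgnP_Weyl (n : ℕ) {g : EucB n ≃ₗ[ℝ] EucB n} (hg : g ∈ WeylB n) :
    SgnP n g ∧ SgnP n g⁻¹ := by
  induction hg using Subgroup.closure_induction with
  | mem g h =>
    obtain ⟨α, hα, rfl⟩ := h
    refine ⟨SgnP_refl n hα, ?_⟩
    rw [inv_eq_of_mul_eq_one_left (sReflB_sq n α)]
    exact SgnP_refl n hα
  | one => exact ⟨SgnP_one n, by simpa using SgnP_one n⟩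
  | mul g h _ _ hg hh =>
    refine ⟨SgnP_mul n hg.1 hh.1, ?_⟩
    rw [mul_inv_rev]
    exact SgnP_mul n hh.2 hg.2
  | inv g _ hg => exact ⟨hg.2, by simpa using hg.1⟩

theorem SgnP_ne (n : ℕ) (g : EucB n ≃ₗ[ℝ] EucB n) {i j k l : Fin n} (hij : i ≠ j)
    {a b : ℝ} (ha : a = 1 ∨ a = -1)
    (hi : g (eB n i) = a • eB n k) (hj : g (eB n j) = b • eB n l) : k ≠ l := by
  rintro rfl
  have ha2 : a * a = 1 := by rcases ha with rfl | rfl <;> norm_num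
  have h : g (eB n j) = g ((b * a) • eB n i) := by
    rw [map_smul, hi, hj, smul_smul, mul_assoc, ha2, mul_one]
  have h1 := congrArg (fun v : EucB n => v j) (g.injective h)
  simp [eB_apply', hij.symm] at h1

theorem SgnP_Delta (n : ℕ) {g : EucB n ≃ₗ[ℝ] EucB n} (hg : SgnP n g) {α : EucB n}
    (hα : α ∈ DeltaB n) : g α ∈ DeltaB n := by
  rw [mem_DeltaB_iff] at hα ⊢
  rcases hα with ⟨i, j, hij, s, t, hs, ht, rfl⟩ | ⟨i, s, hs, rfl⟩
  · left
    obtain ⟨k, a, ha, ea⟩ := hg i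
    obtain ⟨l, b, hb, eb⟩ := hg j
    refine ⟨k, l, SgnP_ne n g hij ha ea eb, s * a, t * b, sgn_mul hs ha, sgn_mul ht hb, ?_⟩
    rw [map_add, map_smul, map_smul, ea, eb, smul_smul, smul_smul]
  · right
    obtain ⟨k, a, ha, ea⟩ := hg i
    exact ⟨k, s * a, sgn_mul hs ha, by rw [map_smul, ea, smul_smul]⟩

open Classical in
/-- a vector representing the grading -/
def xvec (n : ℕ) (θ : EucB n ≃ₗ[ℝ] EucB n) (ε : EucB n → ZMod 2) : EucB n :=
  WithLp.toLp 2 fun i =>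
    if θ (eB n i) = eB n i then ((ε (eB n i)).val : ℝ)
    else if ∃ j, i < j ∧ (θ (eB n i) = eB n j ∨ θ (eB n i) = - eB n j) then
      ((ε (eB n i + θ (eB n i))).val : ℝ)
    else 0

theorem xvec_spec (n : ℕ) (θ : EucB n ≃ₗ[ℝ] EucB n) (hθP : SgnP n θ) (hθ2 : θ * θ = 1)
    (ε : EucB n → ZMod 2)
    (hε1 : ∀ α, α ∈ DeltaB n → θ α = α → ε (-α) = ε α)
    (hε2 : ∀ α β : EucB n, α ∈ DeltaB n → θ α = α → β ∈ DeltaB n → θ β = β →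
      α + β ∈ DeltaB n → ε (α + β) = ε α + ε β)
    (γ : EucB n) (hγ : γ ∈ DeltaB n) (hγθ : θ γ = γ) :
    ∃ z : ℤ, ⟪xvec n θ ε, γ⟫ = (z : ℝ) ∧ (z : ZMod 2) = ε γ := by
  have hεv : ∀ a : ZMod 2, ((a.val : ℤ) : ZMod 2) = a := by decide
  have hneg : ∀ a : ZMod 2, -a = a := by decide
  have hinv : ∀ v, θ (θ v) = v := fun v => by
    rw [← LinearEquiv.mul_apply, hθ2]; rfl
  have hroot1 : ∀ i, eB n i ∈ DeltaB n := fun i => Or.inr ⟨i, Or.inl rfl⟩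
  have hsroot1 : ∀ i (s : ℝ), (s = 1 ∨ s = -1) → s • eB n i ∈ DeltaB n := fun i s hs =>
    (mem_DeltaB_iff n _).2 (Or.inr ⟨i, s, hs, rfl⟩)
  have hεs : ∀ α, α ∈ DeltaB n → θ α = α → ∀ s : ℝ, (s = 1 ∨ s = -1) → ε (s • α) = ε α := by
    intro α h1 h2 s hs
    rcases hs with rfl | rfl
    · simp
    · simpa using hε1 α h1 h2
  have hfix : ∀ i, θ (eB n i) = eB n i → (xvec n θ ε) i = ((ε (eB n i)).val : ℝ) := by
    intro i h
    simp [xvec, h]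
  -- key computation on a pair of swapped coordinates
  have hswap : ∀ i j, i < j → ∀ s : ℝ, (s = 1 ∨ s = -1) → θ (eB n i) = s • eB n j →
      ∃ z : ℤ, ⟪xvec n θ ε, eB n i + s • eB n j⟫ = (z : ℝ) ∧
        (z : ZMod 2) = ε (eB n i + s • eB n j) := by
    intro i j hij s hs h
    have hs2 : s * s = 1 := by rcases hs with rfl | rfl <;> norm_num
    have hj : θ (eB n j) = s • eB n i := by
      have := congrArg (fun v => s • θ v) h
      simp only [hinv, map_smul, smul_smul, hs2, one_smul] at this
      exact this.symm
    have hni : θ (eB n i) ≠ eB n i := by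
      intro h'
      rw [h] at h'
      have := congrArg (fun v : EucB n => v i) h'
      simp [eB_apply', hij.ne] at this
    have hnj : θ (eB n j) ≠ eB n j := by
      intro h'
      rw [hj] at h'
      have := congrArg (fun v : EucB n => v j) h'
      simp [eB_apply', hij.ne'] at this
    have hxi : (xvec n θ ε) i = ((ε (eB n i + s • eB n j)).val : ℝ) := by
      have hex : ∃ j, i < j ∧ (θ (eB n i) = eB n j ∨ θ (eB n i) = - eB n j) := by
        refine ⟨j, hij, ?_⟩
        rw [h]
        rcases hs with rfl | rfl
        · left; simp
        · right; simp
      simp only [xvec]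
      rw [if_neg hni, if_pos hex, h]
    have hxj : (xvec n θ ε) j = 0 := by
      have hex : ¬ ∃ k, j < k ∧ (θ (eB n j) = eB n k ∨ θ (eB n j) = - eB n k) := by
        rintro ⟨k, hjk, hk⟩
        have hik : i ≠ k := (hij.trans hjk).ne
        rw [hj] at hk
        have hs0 : s ≠ 0 := by rintro rfl; norm_num at hs2
        rcases hk with hk | hk
        · have := congrArg (fun v : EucB n => v i) hk
          simp [eB_apply', hik, hs0] at this
        · have := congrArg (fun v : EucB n => v i) hk
          simp [eB_apply', hik, hs0] at this
      simp only [xvec]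
      rw [if_neg hnj, if_neg hex]
    refine ⟨((ε (eB n i + s • eB n j)).val : ℤ), ?_, hεv _⟩
    rw [inner_add_right, real_inner_smul_right, inner_eB, inner_eB, hxi, hxj]
    simp
  rcases (mem_DeltaB_iff n γ).1 hγ with ⟨i, j, hij, s, t, hs, ht, rfl⟩ | ⟨i, s, hs, rfl⟩
  · have hs0 : s ≠ 0 := by rcases hs with rfl | rfl <;> norm_num
    have ht0 : t ≠ 0 := by rcases ht with rfl | rfl <;> norm_num
    have hs2 : s * s = 1 := by rcases hs with rfl | rfl <;> norm_num
    have ht2 : t * t = 1 := by rcases ht with rfl | rfl <;> norm_num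
    obtain ⟨k, a, ha, ea⟩ := hθP i
    obtain ⟨l, b, hb, eb⟩ := hθP j
    have ha0 : a ≠ 0 := by rcases ha with rfl | rfl <;> norm_num
    have hkl := SgnP_ne n θ hij ha ea eb
    have heq := hγθ
    rw [map_add, map_smul, map_smul, ea, eb, smul_smul, smul_smul] at heq
    have c : ∀ m : Fin n, (s * a) * (if m = k then 1 else 0) + (t * b) * (if m = l then 1 else 0)
        = s * (if m = i then 1 else 0) + t * (if m = j then (1:ℝ) else 0) := by
      intro m
      have := congrArg (fun v : EucB n => v m) heq
      simpa only [PiLp.add_apply, PiLp.smul_apply, smul_eq_mul, eB_apply'] using this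
    by_cases hki : k = i
    · subst hki
      have c1 := c k
      simp only [if_pos rfl, if_neg hkl, if_neg hij, if_true] at c1
      have ha1 : a = 1 := by
        have : s * a = s * 1 := by linarith
        exact mul_left_cancel₀ hs0 this
      have c2 := c j
      have hjl : l = j := by
        by_contra hne
        simp [hij.symm, Ne.symm hne] at c2
        exact ht0 c2.symm
      subst hjl
      simp [hij.symm] at c2
      have hb1 : b = 1 := by
        have : t * b = t * 1 := by linarith
        exact mul_left_cancel₀ ht0 this
      subst ha1 hb1
      rw [one_smul] at ea eb
      have e1 : θ (s • eB n k) = s • eB n k := by rw [map_smul, ea]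
      have e2 : θ (t • eB n l) = t • eB n l := by rw [map_smul, eb]
      have hsum := hε2 _ _ (hsroot1 k s hs) e1 (hsroot1 l t ht) e2 hγ
      rw [hεs _ (hroot1 k) ea s hs, hεs _ (hroot1 l) eb t ht] at hsum
      obtain ⟨s', rfl, hs'⟩ : ∃ s' : ℤ, s = s' ∧ (s' : ZMod 2) = 1 := by
        rcases hs with rfl | rfl
        · exact ⟨1, by simp, by decide⟩
        · exact ⟨-1, by simp, by decide⟩
      obtain ⟨t', rfl, ht'⟩ : ∃ t' : ℤ, t = t' ∧ (t' : ZMod 2) = 1 := by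
        rcases ht with rfl | rfl
        · exact ⟨1, by simp, by decide⟩
        · exact ⟨-1, by simp, by decide⟩
      refine ⟨s' * (ε (eB n k)).val + t' * (ε (eB n l)).val, ?_, ?_⟩
      · rw [inner_add_right, real_inner_smul_right, real_inner_smul_right, inner_eB, inner_eB,
          hfix _ ea, hfix _ eb]
        push_cast; rfl
      · rw [hsum, Int.cast_add, Int.cast_mul, Int.cast_mul, hεv, hεv, hs', ht', one_mul, one_mul]
    · have c1 := c k
      have hkj : k = j := by
        by_contra hne
        simp [hkl, hki, hne] at c1
        tauto
      subst hkj
      simp [hkl, hki] at c1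
      -- `s * a = t`
      have c2 := c i
      have hli : l = i := by
        by_contra hne
        simp [hij, Ne.symm hne] at c2
        exact hs0 c2.symm
      subst hli
      simp [hij] at c2
      have hγ1 : s • eB n l + t • eB n k = s • (eB n l + a • eB n k) := by
        rw [smul_add, smul_smul, c1]
      have hγ2 : s • eB n l + t • eB n k = t • (eB n k + b • eB n l) := by
        rw [smul_add, smul_smul, c2, add_comm]
      have fin : ∀ (u : ℝ) (δ : EucB n), (u = 1 ∨ u = -1) →
          s • eB n l + t • eB n k = u • δ →
          (∃ z : ℤ, ⟪xvec n θ ε, δ⟫ = (z : ℝ) ∧ (z : ZMod 2) = ε δ) →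
          ∃ z : ℤ, ⟪xvec n θ ε, s • eB n l + t • eB n k⟫ = (z : ℝ) ∧
            (z : ZMod 2) = ε (s • eB n l + t • eB n k) := by
        rintro u δ hu he ⟨z, hz1, hz2⟩
        rcases hu with rfl | rfl
        · rw [he, one_smul]; exact ⟨z, hz1, hz2⟩
        · have hδ : δ = - (s • eB n l + t • eB n k) := by rw [he]; simp
          refine ⟨-z, ?_, ?_⟩
          · rw [he, real_inner_smul_right, hz1]; push_cast; ring
          · rw [Int.cast_neg, hz2, hneg, hδ, hε1 _ hγ hγθ]
      rcases lt_or_gt_of_ne hij with hlt | hlt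
      · exact fin s _ hs hγ1 (hswap _ _ hlt a ha ea)
      · exact fin t _ ht hγ2 (hswap _ _ hlt b hb eb)
  · have ei : θ (eB n i) = eB n i := by
      rcases hs with rfl | rfl
      · simpa using hγθ
      · simpa using hγθ
    rw [hεs _ (hroot1 i) ei s hs]
    rcases hs with rfl | rfl
    · refine ⟨(ε (eB n i)).val, ?_, hεv _⟩
      rw [real_inner_smul_right, inner_eB, hfix i ei]; push_cast; ring
    · refine ⟨-((ε (eB n i)).val : ℤ), ?_, by rw [Int.cast_neg, hεv, hneg]⟩
      rw [real_inner_smul_right, inner_eB, hfix i ei]; push_cast; ring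

/-- The quotient map from the fixed lattice to `M_θ`. -/
def toM (n : ℕ) (θ : EucB n ≃ₗ[ℝ] EucB n) : ↥(fixedQ n θ) →ₗ[ℤ] MthB n θ :=
  ((ApB n θ).comap (AmB n θ).subtype).mkQ ∘ₗ ((piQ n).submoduleMap (fixedQ n θ))

theorem toM_two (n : ℕ) (θ : EucB n ≃ₗ[ℝ] EucB n) (u : ↥(fixedQ n θ)) :
    toM n θ ((2 : ℤ) • u) = 0 := by
  have h : (piQ n).submoduleMap (fixedQ n θ) ((2 : ℤ) • u) = 0 := by
    apply Subtype.ext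
    change piQ n (((2 : ℤ) • u : ↥(fixedQ n θ)) : ↥(QvB n)) = 0
    rw [piQ, Submodule.mkQ_apply, Submodule.Quotient.mk_eq_zero]
    exact ⟨(u : ↥(QvB n)), rfl⟩
  have h2 : toM n θ ((2 : ℤ) • u) = ((ApB n θ).comap (AmB n θ).subtype).mkQ
      ((piQ n).submoduleMap (fixedQ n θ) ((2 : ℤ) • u)) := rfl
  rw [h2]
  exact (congrArg ((ApB n θ).comap (AmB n θ).subtype).mkQ h).trans (map_zero _)

theorem DeltaBpos_sub (n : ℕ) {v : EucB n} (h : v ∈ DeltaBpos n) : v ∈ DeltaB n := by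
  rcases h with ⟨i, j, hij, h⟩ | ⟨i, h⟩
  · exact Or.inl ⟨i, j, hij, by tauto⟩
  · exact Or.inr ⟨i, Or.inl h⟩

theorem Sword_formula (n : ℕ) (θ : EucB n ≃ₗ[ℝ] EucB n)
    (ε : EucB n → ZMod 2) (x : EucB n)
    (hx : ∀ γ ∈ DeltaB n, θ γ = γ → ∃ z : ℤ, ⟪x, γ⟫ = (z : ℝ) ∧ (z : ZMod 2) = ε γ)
    (L : List (EucB n)) (hL : ∀ β ∈ L, β ∈ SimpleImB n θ) :
    ∀ (acc : EucB n ≃ₗ[ℝ] EucB n) (y : EucB n),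
      (∀ γ ∈ DeltaB n, θ γ = γ → acc γ ∈ DeltaB n ∧ θ (acc γ) = acc γ) →
      (∀ v, ⟪y, v⟫ = ⟪x, acc v⟫) →
      ∃ v : ↥(fixedQ n θ), ((v : ↥(QvB n)) : EucB n) = y - wordProdB n L y ∧
        SwordB n θ ε acc L = toM n θ v := by
  induction L with
  | nil =>
    intro acc y _ _
    refine ⟨0, ?_, ?_⟩
    · simp [wordProdB]
    · rw [map_zero]; rfl
  | cons β L ih =>
    intro acc y hacc hy
    have hβ := hL β (by simp)
    have hβΔ : β ∈ DeltaB n := DeltaBpos_sub n hβ.1.1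
    have hβθ : θ β = β := hβ.1.2
    have h0 := DeltaB_ne_zero n hβΔ
    have hcθ : θ (corootB n β) = corootB n β := by rw [corootB, map_smul, hβθ]
    have hcQ : corootB n β ∈ QvB n := Submodule.subset_span ⟨β, hβΔ, rfl⟩
    let u : ↥(fixedQ n θ) := ⟨⟨corootB n β, hcQ⟩, hcθ⟩
    have hm : mB n θ β = toM n θ u := by
      rw [mB, dif_pos ⟨hcQ, hcθ⟩]; rfl
    obtain ⟨z, hz1, hz2⟩ := hx (acc β) (hacc β hβΔ hβθ).1 (hacc β hβΔ hβθ).2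
    obtain ⟨v, hv1, hv2⟩ := ih (fun b hb => hL b (by simp [hb])) (acc * sReflB n β)
      (sReflB n β y)
      (by
        intro γ hγ hγθ
        rw [LinearEquiv.mul_apply]
        apply hacc
        · exact SgnP_Delta n (SgnP_refl n hβΔ) hγ
        · rw [sReflB_apply n h0, map_sub, map_smul, hβθ, hγθ])
      (by
        intro v
        rw [sReflB_adj n h0, hy, LinearEquiv.mul_apply])
    refine ⟨z • u + v, ?_, ?_⟩
    · have hw : wordProdB n (β :: L) y = wordProdB n L (sReflB n β y) := by
        simp [wordProdB]
      rw [hw]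
      change z • corootB n β + ((v : ↥(QvB n)) : EucB n) = _
      rw [hv1, ← sub_eq_zero]
      have : sReflB n β y = y - z • corootB n β := by
        rw [sReflB_apply' n h0, hy, hz1, Int.cast_smul_eq_zsmul]
      nth_rewrite 1 [this]
      abel
    · rw [SwordB, hv2, map_add, hm]
      congr 1
      have hd : ((z - ((ε (acc β)).val : ℤ) : ℤ) : ZMod 2) = 0 := by
        rw [Int.cast_sub, hz2]
        simp
      obtain ⟨k, hk⟩ := (ZMod.intCast_zmod_eq_zero_iff_dvd _ 2).1 hd
      have hz : z = ((ε (acc β)).val : ℤ) + k * 2 := by push_cast at hk; linarith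
      rw [hz, add_smul, map_add, mul_smul, map_smul (toM n θ) k, toM_two, smul_zero, add_zero,
        map_smul, natCast_zsmul]

/-- Independence of reduced expression: if `L = (β₁,…,β_N)` and `L' = (β'₁,…,β'_M)` are
two minimal-length words in the simple imaginary roots `Π_i` whose products of
reflections both equal `w ∈ W_i`, then `N = M` and `S(β₁,…,β_N) = S(β'₁,…,β'_M)` in
`M_θ`.  Hence `w ↦ m_ε(w)` is a well-defined map `W_i → M_θ`. -/
theorem Sword_well_defined (n : ℕ) (hn : 0 < n)
    (θ : EucB n ≃ₗ[ℝ] EucB n) (hθW : θ ∈ WeylB n) (hθ2 : θ * θ = 1)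
    (ε : EucB n → ZMod 2)
    (hε1 : ∀ α, α ∈ DeltaB n → θ α = α → ε (-α) = ε α)
    (hε2 : ∀ α β : EucB n, α ∈ DeltaB n → θ α = α → β ∈ DeltaB n → θ β = β →
      α + β ∈ DeltaB n → ε (α + β) = ε α + ε β)
    (w : EucB n ≃ₗ[ℝ] EucB n) (L L' : List (EucB n))
    (hL : ∀ β ∈ L, β ∈ SimpleImB n θ) (hL' : ∀ β ∈ L', β ∈ SimpleImB n θ)
    (hLw : wordProdB n L = w) (hL'w : wordProdB n L' = w)
    (hLmin : ∀ K : List (EucB n), (∀ β ∈ K, β ∈ SimpleImB n θ) → wordProdB n K = w →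
      L.length ≤ K.length)
    (hL'min : ∀ K : List (EucB n), (∀ β ∈ K, β ∈ SimpleImB n θ) → wordProdB n K = w →
      L'.length ≤ K.length) :
    L.length = L'.length ∧ SwordB n θ ε 1 L = SwordB n θ ε 1 L' := by
  have hx := xvec_spec n θ (SgnP_Weyl n hθW).1 hθ2 ε hε1 hε2
  refine ⟨le_antisymm (hLmin L' hL' hL'w) (hL'min L hL hLw), ?_⟩
  obtain ⟨v, h1, h2⟩ := Sword_formula n θ ε _ hx L hL 1 (xvec n θ ε)
    (fun γ a b => ⟨a, b⟩) (fun v => rfl)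
  obtain ⟨v', h1', h2'⟩ := Sword_formula n θ ε _ hx L' hL' 1 (xvec n θ ε)
    (fun γ a b => ⟨a, b⟩) (fun v => rfl)
  have hvv : v = v' := by
    apply Subtype.ext
    apply Subtype.ext
    rw [h1, h1', hLw, hL'w]
  rw [h2, h2', hvv]
end
end
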